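/- arXiv:1410.5466 — 7 statements merged into one kernel-verified Lean document; each statement's English description precedes it below -/
import Mathlib

section
/- For every subset S ⊆ ℝ there exists a strictly increasing function g : S → ℝ such that every gap of the image g(S) is either a singleton or an open interval. (This is Debreu's Gap Lemma, the classical case of the paper's conditional Gap Lemma.) -/
/-- A gap of `T ⊆ ℝ`: a nonempty order-convex subset of `ℝ \ T`, maximal with
respect to inclusion among order-convex subsets of `ℝ \ T`, bounded between two
elements of `T`. -/
def IsGap (T G : Set ℝ) : Prop :=
  G.Nonempty ∧ G ⊆ Tᶜ ∧ G.OrdConnected ∧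
    (∀ G' : Set ℝ, G'.OrdConnected → G' ⊆ Tᶜ → G ⊆ G' → G' = G) ∧
    ∃ a ∈ T, ∃ b ∈ T, ∀ x ∈ G, a ≤ x ∧ x ≤ b

/-!
Adjoin to `S` the interval `(a, b)` whenever `a < b` are consecutive elements of `S`, the ray below
a least element of `S` and the ray above a greatest one. The resulting set `U ⊆ ℝ` is order dense
without endpoints, so by Cantor's theorem a countable dense part of it is isomorphic to `ℚ`, and the
isomorphism extends to a strictly increasing `g : U → ℝ` with dense range. A gap of `g '' S` with
more than one point therefore contains some `g u` with `u ∈ U \ S`; this `u` lies in an adjoined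
interval `(a, b)`, and the gap is `(g a, g b)`.
-/

open Set TopologicalSpace

lemma exists_monotone_extension_of_isCoinitial_of_isCofinal {α β : Type*} [LinearOrder α]
    [ConditionallyCompleteLinearOrder β] {f : α → β} {s : Set α} (hf : MonotoneOn f s)
    (hbelow : IsCoinitial s) (habove : IsCofinal s) :
    ∃ g : α → β, Monotone g ∧ EqOn f g s := by
  have bddAbove (x : α) : BddAbove (f '' (Iic x ∩ s)) := by
    obtain ⟨b, hb, hxb⟩ := habove x
    refine ⟨f b, ?_⟩
    rintro _ ⟨a, ⟨hax, ha⟩, rfl⟩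
    exact hf ha hb (le_trans hax hxb)
  refine ⟨fun x => sSup (f '' (Iic x ∩ s)), fun x y hxy => ?_, fun x hx => ?_⟩
  · obtain ⟨a, ha, hax⟩ := hbelow x
    exact csSup_le_csSup (bddAbove y) ⟨f a, a, ⟨hax, ha⟩, rfl⟩ (by gcongr)
  · have hgreatest : IsGreatest (Iic x ∩ s) x := ⟨⟨self_mem_Iic, hx⟩, fun _ hy => hy.1⟩
    exact ((hf.mono inter_subset_right).map_isGreatest hgreatest).csSup_eq.symm

section Dense

variable {X : Type*} [LinearOrder X] [TopologicalSpace X] [OrderClosedTopology X] [DenselyOrdered X]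

lemma strictMono_of_strictMonoOn_dense {β : Type*} [Preorder β] {g : X → β} {s : Set X}
    (hg : Monotone g) (hgs : StrictMonoOn g s) (hs : Dense s) : StrictMono g := fun x y hxy => by
  obtain ⟨c, hc, hxc, hcy⟩ := hs.exists_between hxy
  obtain ⟨d, hd, hcd, hdy⟩ := hs.exists_between hcy
  calc g x ≤ g c := hg hxc.le
    _ < g d := hgs hc hd hcd
    _ ≤ g y := hg hdy.le

variable [NoMinOrder X] [NoMaxOrder X] [Nonempty X]

lemma nonempty_orderIso_rat_of_dense {s : Set X} (hs : Dense s) (hcount : s.Countable) :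
    Nonempty (s ≃o ℚ) := by
  have : Countable s := hcount.to_subtype
  have : Nonempty s := hs.nonempty.to_subtype
  have : DenselyOrdered s := ⟨fun _ _ hxy =>
    let ⟨z, hz, hxz, hzy⟩ := hs.exists_between (Subtype.coe_lt_coe.2 hxy)
    ⟨⟨z, hz⟩, hxz, hzy⟩⟩
  have : NoMinOrder s := ⟨fun x => let ⟨z, hz, hzx⟩ := hs.exists_lt x.1; ⟨⟨z, hz⟩, hzx⟩⟩
  have : NoMaxOrder s := ⟨fun x => let ⟨z, hz, hxz⟩ := hs.exists_gt x.1; ⟨⟨z, hz⟩, hxz⟩⟩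
  exact Order.iso_of_countable_dense s ℚ

variable (X) in
theorem exists_strictMono_denseRange [SeparableSpace X] :
    ∃ g : X → ℝ, StrictMono g ∧ DenseRange g := by
  obtain ⟨C, hCcount, hC⟩ := exists_countable_dense X
  obtain ⟨φ⟩ := nonempty_orderIso_rat_of_dense hC hCcount
  obtain ⟨f, hf⟩ :=
    Subtype.surjective_restrict (β := fun _ => ℝ) (· ∈ C) fun c => (φ c : ℝ)
  have hfC (c : C) : f c = φ c := congrFun hf c
  have hfmono : StrictMonoOn f C := by
    rw [strictMonoOn_iff_strictMono]
    simp only [hfC]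
    exact Rat.cast_strictMono.comp φ.strictMono
  obtain ⟨g, hg, hfg⟩ := exists_monotone_extension_of_isCoinitial_of_isCofinal
    hfmono.monotoneOn hC.exists_le hC.exists_ge
  refine ⟨g, strictMono_of_strictMonoOn_dense hg (hfmono.congr hfg) hC,
    Rat.denseRange_cast.mono ?_⟩
  rintro _ ⟨q, rfl⟩
  exact ⟨φ.symm q, by rw [← hfg (φ.symm q).2, hfC, φ.apply_symm_apply]⟩

end Dense

section JumpFilling

variable {α : Type*} [LinearOrder α] {S : Set α} {x : α}

/-- The set `S` with its jumps filled: `S`, the open intervals between consecutive elements of `S`,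
the points below a least element and those above a greatest one (all of `α` if `S` is empty).
The encoding treats these cases at once: if `S` has elements on one side of `x`, then one of them is
nearest to `x`, where a point of `S` counts as lying on both sides of itself. -/
def jumpFilling (S : Set α) : Set α :=
  {x | ((S ∩ Iic x).Nonempty → ∃ a, IsGreatest (S ∩ Iic x) a) ∧
    ((S ∩ Ici x).Nonempty → ∃ b, IsLeast (S ∩ Ici x) b)}

lemma subset_jumpFilling : S ⊆ jumpFilling S := fun x hx =>
  ⟨fun _ => ⟨x, ⟨hx, self_mem_Iic⟩, fun _ hy => hy.2⟩,
    fun _ => ⟨x, ⟨hx, self_mem_Ici⟩, fun _ hy => hy.2⟩⟩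

instance [DenselyOrdered α] : DenselyOrdered (jumpFilling S) where
  dense := by
    rintro ⟨x, hx⟩ ⟨y, hy⟩ (hxy : x < y)
    by_cases h : ∃ s ∈ S, x < s ∧ s < y
    · obtain ⟨s, hs, hxs, hsy⟩ := h
      exact ⟨⟨s, subset_jumpFilling hs⟩, hxs, hsy⟩
    obtain ⟨z, hxz, hzy⟩ := exists_between hxy
    have hbelow : S ∩ Iic z = S ∩ Iic x := by grind
    have habove : S ∩ Ici z = S ∩ Ici y := by grind
    refine ⟨⟨z, ?_, ?_⟩, hxz, hzy⟩
    · rw [hbelow]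
      exact hx.1
    · rw [habove]
      exact hy.2

instance [NoMinOrder α] : NoMinOrder (jumpFilling S) where
  exists_lt := by
    rintro ⟨x, hx⟩
    by_cases h : ∃ s ∈ S, s < x
    · obtain ⟨s, hs, hsx⟩ := h
      exact ⟨⟨s, subset_jumpFilling hs⟩, hsx⟩
    obtain ⟨z, hzx⟩ := exists_lt x
    have hbelow : S ∩ Iic z = ∅ := by grind
    have habove : S ∩ Ici z = S ∩ Ici x := by grind
    refine ⟨⟨z, ?_, ?_⟩, hzx⟩
    · simp [hbelow]
    · rw [habove]
      exact hx.2

instance [NoMaxOrder α] : NoMaxOrder (jumpFilling S) where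
  exists_gt := by
    rintro ⟨x, hx⟩
    by_cases h : ∃ s ∈ S, x < s
    · obtain ⟨s, hs, hxs⟩ := h
      exact ⟨⟨s, subset_jumpFilling hs⟩, hxs⟩
    obtain ⟨z, hxz⟩ := exists_gt x
    have hbelow : S ∩ Iic z = S ∩ Iic x := by grind
    have habove : S ∩ Ici z = ∅ := by grind
    refine ⟨⟨z, ?_, ?_⟩, hxz⟩
    · rw [hbelow]
      exact hx.1
    · simp [habove]

instance [Nonempty α] : Nonempty (jumpFilling S) := by
  rcases S.eq_empty_or_nonempty with rfl | hS
  · simp [jumpFilling]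
  · exact (hS.mono subset_jumpFilling).to_subtype

lemma exists_mem_Ioo_of_mem_jumpFilling (hx : x ∈ jumpFilling S) (hxS : x ∉ S) {s t : α}
    (hs : s ∈ S) (ht : t ∈ S) (hsx : s ≤ x) (hxt : x ≤ t) :
    ∃ a ∈ S, ∃ b ∈ S, x ∈ Ioo a b ∧ Disjoint (Ioo a b) S := by
  obtain ⟨a, ⟨ha, hax⟩, hamax⟩ := hx.1 ⟨s, hs, hsx⟩
  obtain ⟨b, ⟨hb, hxb⟩, hbmin⟩ := hx.2 ⟨t, ht, hxt⟩
  have hax : a < x := lt_of_le_of_ne hax (ne_of_mem_of_not_mem ha hxS)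
  have hxb : x < b := lt_of_le_of_ne hxb (ne_of_mem_of_not_mem hb hxS).symm
  refine ⟨a, ha, b, hb, ⟨hax, hxb⟩, disjoint_left.2 fun y ⟨hay, hyb⟩ hy => ?_⟩
  rcases le_total y x with hyx | hxy
  · exact hay.not_ge (hamax ⟨hy, hyx⟩)
  · exact hyb.not_ge (hbmin ⟨hy, hxy⟩)

end JumpFilling

lemma disjoint_Ioo_image_of_strictMonoOn {α β : Type*} [LinearOrder α] [Preorder β] {g : α → β}
    {s : Set α} (hg : StrictMonoOn g s) {a b : α} (ha : a ∈ s) (hb : b ∈ s)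
    (h : Disjoint (Ioo a b) s) : Disjoint (Ioo (g a) (g b)) (g '' s) := by
  rw [disjoint_left]
  rintro _ ⟨hac, hcb⟩ ⟨c, hc, rfl⟩
  exact disjoint_left.1 h ⟨(hg.lt_iff_lt ha hc).1 hac, (hg.lt_iff_lt hc hb).1 hcb⟩ hc

lemma IsGap.eq_Ioo {T G : Set ℝ} (hG : IsGap T G) {a b x : ℝ} (ha : a ∈ T) (hb : b ∈ T)
    (hab : Disjoint (Ioo a b) T) (hxG : x ∈ G) (hx : x ∈ Ioo a b) : G = Ioo a b := by
  obtain ⟨-, hGT, hGconv, hGmax, -⟩ := hG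
  refine (hGmax _ ordConnected_Ioo hab.subset_compl_right fun y hy => ⟨?_, ?_⟩).symm
  · by_contra! hya
    exact hGT (hGconv.out hy hxG ⟨hya, hx.1.le⟩) ha
  · by_contra! hby
    exact hGT (hGconv.out hxG hy ⟨hx.2.le, hby⟩) hb

/-- Debreu's Gap Lemma: every subset of ℝ admits a strictly increasing
transformation all of whose gaps are singletons or open intervals. -/
theorem debreu_gap_lemma (S : Set ℝ) :
    ∃ g : ℝ → ℝ, StrictMonoOn g S ∧
      ∀ G : Set ℝ, IsGap (g '' S) G →
        (∃ x : ℝ, G = {x}) ∨ ∃ a b : ℝ, G = Set.Ioo a b := by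
  obtain ⟨g', hg', hdense⟩ := exists_strictMono_denseRange (jumpFilling S)
  obtain ⟨g, rfl⟩ := Subtype.surjective_restrict (β := fun _ => ℝ) (· ∈ jumpFilling S) g'
  have hg : StrictMonoOn g (jumpFilling S) := strictMonoOn_iff_strictMono.2 hg'
  have hgS : StrictMonoOn g S := hg.mono subset_jumpFilling
  refine ⟨g, hgS, fun G hG => ?_⟩
  obtain hsingleton | hnontrivial := hG.1.exists_eq_singleton_or_nontrivial
  · exact Or.inl hsingleton
  obtain ⟨-, hGT, hGconv, -, _, ⟨s, hs, rfl⟩, _, ⟨t, ht, rfl⟩, hst⟩ := id hG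
  obtain ⟨y, hy, z, hz, hyz⟩ := hnontrivial.exists_lt
  obtain ⟨_, ⟨⟨u, hu⟩, rfl⟩, hyu, huz⟩ := hdense.exists_between hyz
  have huG : g u ∈ G := hGconv.out hy hz ⟨hyu.le, huz.le⟩
  have hsu : s ≤ u := (hg.le_iff_le (subset_jumpFilling hs) hu).1 (hst _ huG).1
  have hut : u ≤ t := (hg.le_iff_le hu (subset_jumpFilling ht)).1 (hst _ huG).2
  obtain ⟨a, ha, b, hb, ⟨hau, hub⟩, hab⟩ :=
    exists_mem_Ioo_of_mem_jumpFilling hu (fun huS => hGT huG ⟨u, huS, rfl⟩) hs ht hsu hut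
  have hjump : Disjoint (Ioo (g a) (g b)) (g '' S) :=
    disjoint_Ioo_image_of_strictMonoOn hgS ha hb hab
  have hgu : g u ∈ Ioo (g a) (g b) :=
    ⟨hg (subset_jumpFilling ha) hu hau, hg hu (subset_jumpFilling hb) hub⟩
  exact Or.inr ⟨g a, g b, hG.eq_Ioo ⟨a, ha, rfl⟩ ⟨b, hb, rfl⟩ hjump huG hgu⟩
end

section
/- Let X be a topological space and ≽ a total preorder on X that is upper semicontinuous and admits some utility representation. Then ≽ admits an upper semicontinuous utility representation. (Classical case of the paper's theorem that any numerically representable conditionally upper semicontinuous preference order admits a conditionally upper semicontinuous numerical representation.) -/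
/-!
Replace a utility `u` by its upper semicontinuous regularization `v` with respect to the topology of
those open sets that are lower sets for the preorder. Being a function of the level `u x` alone,
`v` is monotone in `u`, and `u ≤ v`. If `u x < u y`, then either some `z` lies strictly between `x`
and `y`, and the open set `{u < u z}` gives `v x ≤ u z < u y ≤ v y`; or the open set `{u < u y}` is
`{u ≤ u x}`, and then `v x = u x < u y ≤ v y`. Hence `v` orders points exactly as `u` does.
-/

open Set

section LowerNhdsRegularization

variable {X α : Type*} [TopologicalSpace X]

/-- The upper bounds of `u` on neighbourhoods of `x` that are open lower sets for the preorder
induced by `u`. Such a neighbourhood is encoded as the preimage of a lower set `L` of values; taking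
`L` to be the lower closure of the attained values shows that bounding all of `L` loses nothing. -/
def lowerNhdsUpperBounds [Preorder α] (u : X → α) (x : X) : Set α :=
  {a | ∃ L : LowerSet α, u x ∈ L ∧ a ∈ upperBounds (L : Set α) ∧ IsOpen (u ⁻¹' L)}

section Preorder

variable [Preorder α] {u : X → α} {x y : X}

theorem mem_lowerBounds_lowerNhdsUpperBounds (u : X → α) (x : X) :
    u x ∈ lowerBounds (lowerNhdsUpperBounds u x) :=
  fun _ ⟨_, hx, ha, _⟩ ↦ ha hx

theorem lowerNhdsUpperBounds_subset (hxy : u x ≤ u y) :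
    lowerNhdsUpperBounds u y ⊆ lowerNhdsUpperBounds u x :=
  fun _ ⟨L, hy, ha, hL⟩ ↦ ⟨L, L.lower hxy hy, ha, hL⟩

theorem mem_lowerNhdsUpperBounds_of_isOpen_le (h : IsOpen {w | u w ≤ u x}) :
    u x ∈ lowerNhdsUpperBounds u x :=
  ⟨LowerSet.Iic (u x), le_rfl, fun _ ↦ id, h⟩

theorem mem_lowerNhdsUpperBounds_of_isOpen_lt {a : α} (hx : u x < a) (h : IsOpen {w | u w < a}) :
    a ∈ lowerNhdsUpperBounds u x :=
  ⟨LowerSet.Iio a, hx, fun _ ↦ le_of_lt, h⟩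

end Preorder

section LinearOrder

variable [LinearOrder α] {u : X → α} {x y : X}

theorem isOpen_setOf_lt_of_isClosed_setOf_le {a : α} (h : IsClosed {w | a ≤ u w}) :
    IsOpen {w | u w < a} := by
  simpa only [compl_ofPred, not_le] using h.isOpen_compl

theorem exists_mem_lowerNhdsUpperBounds_lt (hu : ∀ z, IsClosed {w | u z ≤ u w}) (hxy : u x < u y) :
    ∃ a ∈ lowerNhdsUpperBounds u x, a < u y := by
  by_cases hgap : ∃ z, u x < u z ∧ u z < u y
  · obtain ⟨z, hxz, hzy⟩ := hgap
    exact ⟨u z, mem_lowerNhdsUpperBounds_of_isOpen_lt hxz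
      (isOpen_setOf_lt_of_isClosed_setOf_le (hu z)), hzy⟩
  · push Not at hgap
    have le_iff_lt (w : X) : u w ≤ u x ↔ u w < u y :=
      ⟨fun h ↦ h.trans_lt hxy, fun h ↦ le_of_not_gt fun hxw ↦ (hgap w hxw).not_gt h⟩
    refine ⟨u x, mem_lowerNhdsUpperBounds_of_isOpen_le ?_, hxy⟩
    simpa only [le_iff_lt] using isOpen_setOf_lt_of_isClosed_setOf_le (hu y)

theorem lowerNhdsUpperBounds_nonempty (hu : ∀ z, IsClosed {w | u z ≤ u w}) (x : X) :
    (lowerNhdsUpperBounds u x).Nonempty := by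
  by_cases hmax : ∃ y, u x < u y
  · obtain ⟨y, hxy⟩ := hmax
    exact (exists_mem_lowerNhdsUpperBounds_lt hu hxy).imp fun _ ↦ And.left
  · push Not at hmax
    have huniv : {w | u w ≤ u x} = univ := eq_univ_of_forall hmax
    exact ⟨u x, mem_lowerNhdsUpperBounds_of_isOpen_le (huniv ▸ isOpen_univ)⟩

end LinearOrder

variable [ConditionallyCompleteLinearOrder α] {u : X → α} {x y : X}

/-- The upper semicontinuous regularization of `u` for the topology of open sets that are lower
sets for the preorder induced by `u`. The infimum is a junk value if `lowerNhdsUpperBounds u x` is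
empty. -/
noncomputable def lowerNhdsRegularization (u : X → α) (x : X) : α :=
  sInf (lowerNhdsUpperBounds u x)

theorem lowerNhdsRegularization_le {a : α} (ha : a ∈ lowerNhdsUpperBounds u x) :
    lowerNhdsRegularization u x ≤ a :=
  csInf_le ⟨u x, mem_lowerBounds_lowerNhdsUpperBounds u x⟩ ha

theorem le_lowerNhdsRegularization (hx : (lowerNhdsUpperBounds u x).Nonempty) :
    u x ≤ lowerNhdsRegularization u x :=
  le_csInf hx (mem_lowerBounds_lowerNhdsUpperBounds u x)

theorem lowerNhdsRegularization_mono (hy : (lowerNhdsUpperBounds u y).Nonempty) (hxy : u x ≤ u y) :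
    lowerNhdsRegularization u x ≤ lowerNhdsRegularization u y :=
  le_csInf hy fun _ ha ↦ lowerNhdsRegularization_le (lowerNhdsUpperBounds_subset hxy ha)

theorem upperSemicontinuous_lowerNhdsRegularization
    (hu : ∀ x, (lowerNhdsUpperBounds u x).Nonempty) :
    UpperSemicontinuous (lowerNhdsRegularization u) := by
  intro x m hm
  obtain ⟨a, ⟨L, hx, ha, hL⟩, ham⟩ := exists_lt_of_csInf_lt (hu x) hm
  filter_upwards [hL.mem_nhds hx] with w hw
  exact (lowerNhdsRegularization_le ⟨L, hw, ha, hL⟩).trans_lt ham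

theorem lowerNhdsRegularization_lt (hu : ∀ z, IsClosed {w | u z ≤ u w}) (hxy : u x < u y) :
    lowerNhdsRegularization u x < lowerNhdsRegularization u y := by
  obtain ⟨a, ha, hay⟩ := exists_mem_lowerNhdsUpperBounds_lt hu hxy
  calc
    lowerNhdsRegularization u x ≤ a := lowerNhdsRegularization_le ha
    _ < u y := hay
    _ ≤ lowerNhdsRegularization u y :=
      le_lowerNhdsRegularization (lowerNhdsUpperBounds_nonempty hu y)

theorem lowerNhdsRegularization_le_iff (hu : ∀ z, IsClosed {w | u z ≤ u w}) :
    lowerNhdsRegularization u x ≤ lowerNhdsRegularization u y ↔ u x ≤ u y :=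
  ⟨fun h ↦ le_of_not_gt fun hyx ↦ (lowerNhdsRegularization_lt hu hyx).not_ge h,
    lowerNhdsRegularization_mono (lowerNhdsUpperBounds_nonempty hu y)⟩

end LowerNhdsRegularization

theorem usc_representation_of_representable_general
    {X α : Type*} [TopologicalSpace X] [ConditionallyCompleteLinearOrder α] (R : X → X → Prop)
    (husc : ∀ x, IsClosed {y | R y x})
    (hrep : ∃ u : X → α, ∀ x y, R x y ↔ u y ≤ u x) :
    ∃ u : X → α, (∀ m : α, IsClosed {x | m ≤ u x}) ∧
      ∀ x y, R x y ↔ u y ≤ u x := by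
  obtain ⟨u, hu⟩ := hrep
  simp only [hu] at husc ⊢
  have hv : UpperSemicontinuous (lowerNhdsRegularization u) :=
    upperSemicontinuous_lowerNhdsRegularization (lowerNhdsUpperBounds_nonempty husc)
  exact ⟨lowerNhdsRegularization u, upperSemicontinuous_iff_isClosed_preimage.1 hv,
    fun _ _ ↦ (lowerNhdsRegularization_le_iff husc).symm⟩

/-- Any numerically representable upper semicontinuous total preorder admits an
upper semicontinuous utility representation. -/
theorem usc_representation_of_representable
    {X : Type*} [TopologicalSpace X] (R : X → X → Prop)
    (hrefl : ∀ x, R x x)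
    (htrans : ∀ x y z, R x y → R y z → R x z)
    (htotal : ∀ x y, R x y ∨ R y x)
    (husc : ∀ x, IsClosed {y | R y x})
    (hrep : ∃ u : X → ℝ, ∀ x y, R x y ↔ u y ≤ u x) :
    ∃ u : X → ℝ, (∀ m : ℝ, IsClosed {x | m ≤ u x}) ∧
      ∀ x y, R x y ↔ u y ≤ u x :=
  usc_representation_of_representable_general R husc hrep
end

section
/- Let X be a second countable topological space and ≽ an upper semicontinuous total preorder on X. Then ≽ admits an upper semicontinuous utility representation. (Rader's theorem, the classical case of the paper's theorem on representations of conditionally upper semicontinuous preference orders on conditionally second countable spaces.) -/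
/-!
If countably many open lower sets `G i` separate every pair `x < y` (some `G i` contains `x` but
not `y`), and `w` is a summable family of positive weights, then `u x = -∑ w i` over the `i` with
`x ∈ G i` is increasing, strictly increasing and upper semicontinuous.

In a total preorder whose sets `Ici a` are closed, the sets `Iio a` are open, and such a family is
obtained from a countable base. Let `x < y`. If `x < z < y` for some `z`, a basic `b` with
`z ∈ b ⊆ Iio y` has an element above `x`, so the set of points strictly below some element of `b`
separates `x` from `y`; it is open as a union of sets `Iio`. Otherwise `y` covers `x`, and
a basic `b` with `x ∈ b ⊆ Iio y` has lower closure exactly `Iio y`. Each basic set thus contributes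
at most two members to the family.
-/

open Set TopologicalSpace

section WeightedMembership

variable {ι X : Type*}

theorem lowerSemicontinuous_tsum_of_nonneg [TopologicalSpace X] {f : ι → X → ℝ}
    (hf : ∀ i, LowerSemicontinuous (f i)) (hf_nonneg : ∀ i x, 0 ≤ f i x)
    (hf_summable : ∀ x, Summable (f · x)) : LowerSemicontinuous fun x => ∑' i, f i x := by
  intro x a ha
  obtain ⟨s, hs⟩ : ∃ s : Finset ι, a < ∑ i ∈ s, f i x :=
    ((hf_summable x).hasSum.eventually_const_lt ha).exists
  have hsum : LowerSemicontinuous fun y => ∑ i ∈ s, f i y :=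
    lowerSemicontinuous_sum fun i _ => hf i
  filter_upwards [hsum x a hs] with y hy
  exact hy.trans_le ((hf_summable y).sum_le_tsum s fun i _ => hf_nonneg i y)

/-- The total weight of the members of the family `G` that contain `x`. For a non-summable `w` the
sum may take the junk value `0`. -/
noncomputable def membershipWeight (w : ι → ℝ) (G : ι → Set X) (x : X) : ℝ :=
  ∑' i, (G i).indicator (fun _ => w i) x

variable {w : ι → ℝ} {G : ι → Set X} {x y : X}

theorem summable_indicator_weight (hw : Summable w) (G : ι → Set X) (x : X) :
    Summable fun i => (G i).indicator (fun _ => w i) x :=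
  hw.indicator {i | x ∈ G i}

theorem lowerSemicontinuous_membershipWeight [TopologicalSpace X] (hw_nonneg : ∀ i, 0 ≤ w i)
    (hw : Summable w) (hG : ∀ i, IsOpen (G i)) : LowerSemicontinuous (membershipWeight w G) :=
  lowerSemicontinuous_tsum_of_nonneg (fun i => (hG i).lowerSemicontinuous_indicator (hw_nonneg i))
    (fun i => indicator_nonneg fun _ _ => hw_nonneg i) (summable_indicator_weight hw G)

theorem indicator_weight_le_of_imp (hw_nonneg : ∀ i, 0 ≤ w i) (h : ∀ i, x ∈ G i → y ∈ G i)
    (i : ι) : (G i).indicator (fun _ => w i) x ≤ (G i).indicator (fun _ => w i) y :=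
  indicator_le_indicator_of_subset (s := {i | x ∈ G i}) (t := {i | y ∈ G i}) h hw_nonneg i

theorem membershipWeight_le_of_imp (hw_nonneg : ∀ i, 0 ≤ w i) (hw : Summable w)
    (h : ∀ i, x ∈ G i → y ∈ G i) : membershipWeight w G x ≤ membershipWeight w G y :=
  (summable_indicator_weight hw G x).tsum_le_tsum (indicator_weight_le_of_imp hw_nonneg h)
    (summable_indicator_weight hw G y)

theorem membershipWeight_lt_of_imp (hw_pos : ∀ i, 0 < w i) (hw : Summable w)
    (h : ∀ i, x ∈ G i → y ∈ G i) {i : ι} (hx : x ∉ G i) (hy : y ∈ G i) :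
    membershipWeight w G x < membershipWeight w G y := by
  refine Summable.tsum_lt_tsum (i := i)
    (indicator_weight_le_of_imp (fun j => (hw_pos j).le) h) ?_
    (summable_indicator_weight hw G x) (summable_indicator_weight hw G y)
  rw [indicator_of_notMem hx, indicator_of_mem hy]
  exact hw_pos i

theorem exists_upperSemicontinuous_monotone_strictMono [TopologicalSpace X] [Preorder X]
    [Countable ι] (L : ι → LowerSet X) (hL : ∀ i, IsOpen (L i : Set X))
    (hsep : ∀ x y, x < y → ∃ i, x ∈ L i ∧ y ∉ L i) :
    ∃ u : X → ℝ, UpperSemicontinuous u ∧ Monotone u ∧ StrictMono u := by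
  obtain ⟨_⟩ := nonempty_encodable ι
  let w : ι → ℝ := fun i => (1 / 2) ^ Encodable.encode i
  have hw : Summable w := summable_geometric_two_encode
  have hw_pos : ∀ i, 0 < w i := fun i => by positivity
  have hw_nonneg : ∀ i, 0 ≤ w i := fun i => (hw_pos i).le
  have hlower {x y : X} (hxy : x ≤ y) (i : ι) : y ∈ L i → x ∈ L i := (L i).lower hxy
  refine ⟨fun x => -membershipWeight w (fun i => L i) x, ?_, fun x y hxy => ?_, fun x y hxy => ?_⟩
  · exact continuous_neg.comp_lowerSemicontinuous_antitone
      (lowerSemicontinuous_membershipWeight hw_nonneg hw hL) fun _ _ => neg_le_neg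
  · exact neg_le_neg (membershipWeight_le_of_imp hw_nonneg hw (hlower hxy))
  · obtain ⟨i, hx, hy⟩ := hsep x y hxy
    exact neg_lt_neg (membershipWeight_lt_of_imp hw_pos hw (hlower hxy.le) hy hx)

end WeightedMembership

section TotalPreorder

variable {X : Type*} [Preorder X]

/-- The strict analogue of `lowerClosure`: the points strictly below some element of `s`. -/
def strictLowerClosure (s : Set X) : LowerSet X :=
  ⨆ b ∈ s, LowerSet.Iio b

theorem mem_strictLowerClosure {s : Set X} {x : X} :
    x ∈ strictLowerClosure s ↔ ∃ b ∈ s, x < b := by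
  simp only [strictLowerClosure, LowerSet.mem_iSup_iff, LowerSet.mem_Iio_iff, exists_prop]

variable [@Std.Total X (· ≤ ·)]

theorem le_iff_le_of_monotone_of_strictMono {Y : Type*} [Preorder Y] {u : X → Y}
    (hu_mono : Monotone u) (hu_strict : StrictMono u) {x y : X} : u x ≤ u y ↔ x ≤ y :=
  ⟨fun h => Std.not_lt.1 fun hyx => (hu_strict hyx).not_ge h, fun h => hu_mono h⟩

theorem coe_lowerClosure_eq_Iio_of_covBy {s : Set X} {x y : X} (hxy : x ⋖ y) (hx : x ∈ s)
    (hs : s ⊆ Iio y) : (lowerClosure s : Set X) = Iio y := by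
  refine Subset.antisymm (lowerClosure_min hs (isLowerSet_Iio y)) fun z hz => ?_
  have hzx : z ≤ x := Std.not_lt.1 fun hxz => hxy.2 hxz hz
  exact ⟨x, hx, hzx⟩

variable [TopologicalSpace X] [ClosedIciTopology X]

theorem isOpen_Iio_of_total (a : X) : IsOpen (Iio a) := by
  have hcompl : (Ici a)ᶜ = Iio a := ext fun _ => Std.not_le
  exact hcompl ▸ isClosed_Ici.isOpen_compl

theorem isOpen_strictLowerClosure (s : Set X) : IsOpen (strictLowerClosure s : Set X) := by
  simp only [strictLowerClosure, LowerSet.coe_iSup, LowerSet.coe_Iio]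
  exact isOpen_biUnion fun b _ => isOpen_Iio_of_total b

theorem exists_mem_basis_separating {B : Set (Set X)} (hB : IsTopologicalBasis B) {x y : X}
    (hxy : x < y) :
    ∃ b ∈ B, ∃ L ∈ ({lowerClosure b, strictLowerClosure b} : Set (LowerSet X)),
      IsOpen (L : Set X) ∧ x ∈ L ∧ y ∉ L := by
  by_cases hcov : x ⋖ y
  · obtain ⟨b, hb, hxb, hby⟩ := hB.exists_subset_of_mem_open (mem_Iio.2 hxy)
      (isOpen_Iio_of_total y)
    have hLy : (lowerClosure b : Set X) = Iio y := coe_lowerClosure_eq_Iio_of_covBy hcov hxb hby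
    refine ⟨b, hb, lowerClosure b, Or.inl rfl, hLy ▸ isOpen_Iio_of_total y,
      subset_lowerClosure hxb, fun hy => ?_⟩
    exact lt_irrefl y (hLy.subset hy)
  · obtain ⟨z, hxz, hzy⟩ := exists_lt_lt_of_not_covBy hxy hcov
    obtain ⟨b, hb, hzb, hby⟩ := hB.exists_subset_of_mem_open (mem_Iio.2 hzy)
      (isOpen_Iio_of_total y)
    refine ⟨b, hb, strictLowerClosure b, Or.inr rfl, isOpen_strictLowerClosure b,
      mem_strictLowerClosure.2 ⟨z, hzb, hxz⟩, fun hy => ?_⟩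
    obtain ⟨c, hcb, hyc⟩ := mem_strictLowerClosure.1 hy
    exact hyc.not_gt (hby hcb)

theorem exists_countable_isOpen_lowerSet_separating [SecondCountableTopology X] :
    ∃ S : Set (LowerSet X), S.Countable ∧ (∀ L ∈ S, IsOpen (L : Set X)) ∧
      ∀ x y, x < y → ∃ L ∈ S, x ∈ L ∧ y ∉ L := by
  let S : Set (LowerSet X) := ⋃ b ∈ countableBasis X, {lowerClosure b, strictLowerClosure b}
  have hS : S.Countable := (countable_countableBasis X).biUnion fun _ _ => to_countable _
  refine ⟨{L ∈ S | IsOpen (L : Set X)}, hS.mono (sep_subset _ _), fun L hL => hL.2,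
    fun x y hxy => ?_⟩
  obtain ⟨b, hb, L, hL, hL_open, hsep⟩ :=
    exists_mem_basis_separating (isBasis_countableBasis X) hxy
  exact ⟨L, ⟨mem_biUnion hb hL, hL_open⟩, hsep⟩

end TotalPreorder

/-- Rader's theorem: an upper semicontinuous total preorder on a second countable
topological space admits an upper semicontinuous utility representation. -/
theorem rader_usc_representation
    {X : Type*} [TopologicalSpace X] [SecondCountableTopology X]
    (R : X → X → Prop)
    (hrefl : ∀ x, R x x)
    (htrans : ∀ x y z, R x y → R y z → R x z)
    (htotal : ∀ x y, R x y ∨ R y x)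
    (husc : ∀ x, IsClosed {y | R y x}) :
    ∃ u : X → ℝ, (∀ m : ℝ, IsClosed {x | m ≤ u x}) ∧
      ∀ x y, R x y ↔ u y ≤ u x := by
  let _ : Preorder X :=
    { le := fun x y => R y x
      le_refl := hrefl
      le_trans := fun x y z hxy hyz => htrans z y x hyz hxy }
  have : @Std.Total X (· ≤ ·) := ⟨fun x y => htotal y x⟩
  have : ClosedIciTopology X := ⟨husc⟩
  obtain ⟨S, hS, hS_open, hS_sep⟩ := exists_countable_isOpen_lowerSet_separating (X := X)
  have := hS.to_subtype
  obtain ⟨u, hu_usc, hu_mono, hu_strict⟩ :=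
    exists_upperSemicontinuous_monotone_strictMono (fun L : S => L.1) (fun L => hS_open L L.2)
      fun x y hxy => let ⟨L, hL, hsep⟩ := hS_sep x y hxy; ⟨⟨L, hL⟩, hsep⟩
  exact ⟨u, upperSemicontinuous_iff_isClosed_preimage.1 hu_usc,
    fun x y => (le_iff_le_of_monotone_of_strictMono hu_mono hu_strict).symm⟩
end

section
/- Let X be a convex subset of a real vector space and ≽ a total preorder on X satisfying the independence axiom and the Archimedean axiom. If x ≻ z and x ≽ y ≽ z, then there exists a unique α ∈ [0,1] such that y ∼ αx + (1−α)z. (Part (ii) of the paper's Lemma on mixture preferences, classical case.) -/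
/-!
Along the segment from `z` to `x`, independence makes preference strictly increasing in the weight
`α` put on `x`, so at most one weight calibrates `y`. Let `s` be the supremum of the weights whose
mixture is weakly worse than `y`. If the mixture at `s` were strictly better than `y`, the
Archimedean axiom would give a strictly better mixture of smaller weight, so `s` would not be the
least upper bound; if it were strictly worse, the axiom would give a strictly worse mixture of
larger weight, so `s` would not be an upper bound.
-/

/-- The strict part of a binary relation. -/
def SPref {V : Type*} (R : V → V → Prop) (x y : V) : Prop := R x y ∧ ¬ R y x

/-- The mixture `αx + (1 - α)z`, in which `α` is the weight of the first point. -/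
def mixture {𝕜 V : Type*} [Ring 𝕜] [AddCommGroup V] [Module 𝕜 V] (x z : V) (α : 𝕜) : V :=
  α • x + (1 - α) • z

/-- The independence axiom on `X`: mixing two strictly ranked points with a common third point
preserves their ranking. -/
def IndependenceOn (𝕜 : Type*) {V : Type*} [Ring 𝕜] [PartialOrder 𝕜] [AddCommGroup V] [Module 𝕜 V]
    (X : Set V) (R : V → V → Prop) : Prop :=
  ∀ x ∈ X, ∀ y ∈ X, ∀ z ∈ X, ∀ α : 𝕜, 0 < α → α ≤ 1 →
    SPref R x y → SPref R (mixture x z α) (mixture y z α)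

/-- The Archimedean axiom on `X`: no point is infinitely better or infinitely worse than
another. -/
def ArchimedeanOn (𝕜 : Type*) {V : Type*} [Ring 𝕜] [PartialOrder 𝕜] [AddCommGroup V] [Module 𝕜 V]
    (X : Set V) (R : V → V → Prop) : Prop :=
  ∀ x ∈ X, ∀ y ∈ X, ∀ z ∈ X, SPref R x y → SPref R y z →
    ∃ α ∈ Set.Ioo (0 : 𝕜) 1, ∃ β ∈ Set.Ioo (0 : 𝕜) 1,
      SPref R (mixture x z α) y ∧ SPref R y (mixture x z β)

section Mixture

variable {𝕜 V : Type*} [CommRing 𝕜] [AddCommGroup V] [Module 𝕜 V]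

@[simp]
theorem mixture_zero (x z : V) : mixture x z (0 : 𝕜) = z := by simp [mixture]

@[simp]
theorem mixture_one (x z : V) : mixture x z (1 : 𝕜) = x := by simp [mixture]

@[simp]
theorem mixture_self (x : V) (α : 𝕜) : mixture x x α = x := by simp [mixture, ← add_smul]

theorem mixture_one_sub (x z : V) (α : 𝕜) : mixture x z (1 - α) = mixture z x α := by
  simp [mixture, add_comm]

theorem mixture_mixture_left (x z : V) (α β : 𝕜) :
    mixture (mixture x z β) z α = mixture x z (α * β) := by
  simp only [mixture]
  module

theorem mixture_mixture_right (x z : V) (α β : 𝕜) :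
    mixture x (mixture x z β) α = mixture x z (β + α * (1 - β)) := by
  simp only [mixture]
  module

end Mixture

section OrderedRing

variable {𝕜 V : Type*} [CommRing 𝕜] [PartialOrder 𝕜] [AddCommGroup V] [Module 𝕜 V] {X : Set V}
  {R : V → V → Prop} {x y z : V} {s a : 𝕜}

theorem mixture_mem [IsOrderedRing 𝕜] (hX : Convex 𝕜 X) (hx : x ∈ X) (hz : z ∈ X)
    (ha : a ∈ Set.Icc 0 1) : mixture x z a ∈ X :=
  hX hx hz ha.1 (sub_nonneg.2 ha.2) (add_sub_cancel a 1)

theorem IndependenceOn.mixture_sPref_right (hind : IndependenceOn 𝕜 X R) (hx : x ∈ X)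
    (hz : z ∈ X) (hxz : SPref R x z) (ha₀ : 0 < a) (ha₁ : a ≤ 1) : SPref R (mixture x z a) z := by
  simpa only [mixture_self] using hind x hx z hz z hz a ha₀ ha₁ hxz

theorem IndependenceOn.sPref_mixture_left [IsOrderedRing 𝕜] (hind : IndependenceOn 𝕜 X R)
    (hx : x ∈ X) (hz : z ∈ X) (hxz : SPref R x z) (ha₀ : 0 ≤ a) (ha₁ : a < 1) :
    SPref R x (mixture x z a) := by
  simpa only [mixture_self, mixture_one_sub] using
    hind x hx z hz x hx (1 - a) (sub_pos.2 ha₁) (sub_le_self 1 ha₀) hxz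

theorem ArchimedeanOn.exists_lt_mixture_sPref [IsStrictOrderedRing 𝕜]
    (harch : ArchimedeanOn 𝕜 X R) (hX : Convex 𝕜 X) (hx : x ∈ X) (hy : y ∈ X) (hz : z ∈ X)
    (hyz : SPref R y z) (hs : s ∈ Set.Icc 0 1) (hsy : SPref R (mixture x z s) y) :
    ∃ t ∈ Set.Ico 0 s, SPref R (mixture x z t) y := by
  have hs₀ : 0 < s := hs.1.lt_of_ne' fun h ↦ hyz.2 (by simpa [h] using hsy.1)
  obtain ⟨α, hα, -, -, hαy, -⟩ := harch _ (mixture_mem hX hx hz hs) y hy z hz hsy hyz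
  rw [mixture_mixture_left] at hαy
  exact ⟨α * s, ⟨mul_nonneg hα.1.le hs.1, mul_lt_of_lt_one_left hs₀ hα.2⟩, hαy⟩

theorem ArchimedeanOn.exists_gt_sPref_mixture [IsStrictOrderedRing 𝕜]
    (harch : ArchimedeanOn 𝕜 X R) (hX : Convex 𝕜 X) (hx : x ∈ X) (hy : y ∈ X) (hz : z ∈ X)
    (hxy : SPref R x y) (hs : s ∈ Set.Icc 0 1) (hys : SPref R y (mixture x z s)) :
    ∃ t ∈ Set.Ioc s 1, SPref R y (mixture x z t) := by
  have hs₁ : 0 < 1 - s := sub_pos.2 (hs.2.lt_of_ne fun h ↦ hxy.2 (by simpa [h] using hys.1))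
  obtain ⟨-, -, β, hβ, -, hyβ⟩ := harch x hx y hy _ (mixture_mem hX hx hz hs) hxy hys
  rw [mixture_mixture_right] at hyβ
  exact ⟨s + β * (1 - s), ⟨lt_add_of_pos_right s (mul_pos hβ.1 hs₁),
    add_le_of_le_sub_left (mul_le_of_le_one_left hs₁.le hβ.2.le)⟩, hyβ⟩

end OrderedRing

section OrderedField

variable {𝕜 V : Type*} [Field 𝕜] [LinearOrder 𝕜] [IsStrictOrderedRing 𝕜] [AddCommGroup V]
  [Module 𝕜 V] {X : Set V} {R : V → V → Prop} {x y z : V} {a b : 𝕜}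

theorem IndependenceOn.mixture_sPref_mixture (hind : IndependenceOn 𝕜 X R) (hX : Convex 𝕜 X)
    (hx : x ∈ X) (hz : z ∈ X) (hxz : SPref R x z) (hb : 0 ≤ b) (hba : b < a) (ha : a ≤ 1) :
    SPref R (mixture x z a) (mixture x z b) := by
  have hb₁ : b < 1 := hba.trans_le ha
  have hγ₀ : 0 < (a - b) / (1 - b) := div_pos (sub_pos.2 hba) (sub_pos.2 hb₁)
  have hγ₁ : (a - b) / (1 - b) ≤ 1 := (div_le_one (sub_pos.2 hb₁)).2 (sub_le_sub_right ha b)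
  have h := hind.mixture_sPref_right hx (mixture_mem hX hx hz ⟨hb, hb₁.le⟩)
    (hind.sPref_mixture_left hx hz hxz hb hb₁) hγ₀ hγ₁
  rwa [mixture_mixture_right, div_mul_cancel₀ _ (sub_pos.2 hb₁).ne', add_sub_cancel] at h

theorem IndependenceOn.weight_le_of_rel (hind : IndependenceOn 𝕜 X R) (hX : Convex 𝕜 X)
    (htrans : ∀ x ∈ X, ∀ y ∈ X, ∀ z ∈ X, R x y → R y z → R x z)
    (hx : x ∈ X) (hy : y ∈ X) (hz : z ∈ X) (hxz : SPref R x z)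
    (ha : a ∈ Set.Icc 0 1) (hb : b ∈ Set.Icc 0 1)
    (hya : R y (mixture x z a)) (hby : R (mixture x z b) y) : a ≤ b := by
  by_contra! hba
  exact (hind.mixture_sPref_mixture hX hx hz hxz hb.1 hba ha.2).2
    (htrans _ (mixture_mem hX hx hz hb) _ hy _ (mixture_mem hX hx hz ha) hby hya)

end OrderedField

theorem exists_antisymmRel_mixture_of_sPref {V : Type*} [AddCommGroup V] [Module ℝ V] {X : Set V}
    {R : V → V → Prop} {x y z : V} (hX : Convex ℝ X)
    (htrans : ∀ x ∈ X, ∀ y ∈ X, ∀ z ∈ X, R x y → R y z → R x z)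
    (htotal : ∀ x ∈ X, ∀ y ∈ X, R x y ∨ R y x)
    (hind : IndependenceOn ℝ X R) (harch : ArchimedeanOn ℝ X R)
    (hx : x ∈ X) (hy : y ∈ X) (hz : z ∈ X) (hxy : SPref R x y) (hyz : SPref R y z) :
    ∃ α ∈ Set.Icc (0 : ℝ) 1, AntisymmRel R y (mixture x z α) := by
  have hxz : SPref R x z := ⟨htrans x hx y hy z hz hxy.1 hyz.1,
    fun hzx ↦ hxy.2 (htrans y hy z hz x hx hyz.1 hzx)⟩
  let S : Set ℝ := {a ∈ Set.Icc 0 1 | R y (mixture x z a)}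
  have zero_mem : 0 ∈ S := ⟨Set.left_mem_Icc.2 zero_le_one, by simpa using hyz.1⟩
  have bddAbove : BddAbove S := ⟨1, fun a ha ↦ ha.1.2⟩
  have sup_mem : sSup S ∈ Set.Icc 0 1 :=
    ⟨le_csSup bddAbove zero_mem, csSup_le ⟨0, zero_mem⟩ fun a ha ↦ ha.1.2⟩
  have total := htotal y hy _ (mixture_mem hX hx hz sup_mem)
  refine ⟨sSup S, sup_mem, ?_, ?_⟩
  · by_contra not_rel
    obtain ⟨t, ht, hty⟩ := harch.exists_lt_mixture_sPref hX hx hy hz hyz sup_mem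
      ⟨total.resolve_left not_rel, not_rel⟩
    have sup_le : sSup S ≤ t := csSup_le ⟨0, zero_mem⟩ fun a ha ↦
      hind.weight_le_of_rel hX htrans hx hy hz hxz ha.1 ⟨ht.1, ht.2.le.trans sup_mem.2⟩ ha.2 hty.1
    exact ht.2.not_ge sup_le
  · by_contra not_rel
    obtain ⟨t, ht, hyt⟩ := harch.exists_gt_sPref_mixture hX hx hy hz hxy sup_mem
      ⟨total.resolve_right not_rel, not_rel⟩
    have le_sup : t ≤ sSup S := le_csSup bddAbove ⟨⟨sup_mem.1.trans ht.1.le, ht.2⟩, hyt.1⟩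
    exact ht.1.not_ge le_sup

theorem exists_antisymmRel_mixture {V : Type*} [AddCommGroup V] [Module ℝ V] {X : Set V}
    {R : V → V → Prop} {x y z : V} (hX : Convex ℝ X)
    (htrans : ∀ x ∈ X, ∀ y ∈ X, ∀ z ∈ X, R x y → R y z → R x z)
    (htotal : ∀ x ∈ X, ∀ y ∈ X, R x y ∨ R y x)
    (hind : IndependenceOn ℝ X R) (harch : ArchimedeanOn ℝ X R)
    (hx : x ∈ X) (hy : y ∈ X) (hz : z ∈ X) (hxy : R x y) (hyz : R y z) :
    ∃ α ∈ Set.Icc (0 : ℝ) 1, AntisymmRel R y (mixture x z α) := by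
  by_cases hyx : R y x
  · exact ⟨1, Set.right_mem_Icc.2 zero_le_one, by simpa using ⟨hyx, hxy⟩⟩
  by_cases hzy : R z y
  · exact ⟨0, Set.left_mem_Icc.2 zero_le_one, by simpa using ⟨hyz, hzy⟩⟩
  exact exists_antisymmRel_mixture_of_sPref hX htrans htotal hind harch hx hy hz
    ⟨hxy, hyx⟩ ⟨hyz, hzy⟩

/-- Unique calibration: under independence and the Archimedean axiom, if `x ≻ z`
and `x ≽ y ≽ z`, there is a unique `α ∈ [0,1]` with `y ∼ αx + (1-α)z`. -/
theorem mixture_unique_calibration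
    {V : Type*} [AddCommGroup V] [Module ℝ V] (X : Set V) (hX : Convex ℝ X)
    (R : V → V → Prop)
    (hrefl : ∀ x ∈ X, R x x)
    (htrans : ∀ x ∈ X, ∀ y ∈ X, ∀ z ∈ X, R x y → R y z → R x z)
    (htotal : ∀ x ∈ X, ∀ y ∈ X, R x y ∨ R y x)
    (hind : ∀ x ∈ X, ∀ y ∈ X, ∀ z ∈ X, ∀ α : ℝ, 0 < α → α ≤ 1 →
      SPref R x y → SPref R (α • x + (1 - α) • z) (α • y + (1 - α) • z))
    (harch : ∀ x ∈ X, ∀ y ∈ X, ∀ z ∈ X, SPref R x y → SPref R y z →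
      ∃ α ∈ Set.Ioo (0:ℝ) 1, ∃ β ∈ Set.Ioo (0:ℝ) 1,
        SPref R (α • x + (1 - α) • z) y ∧ SPref R y (β • x + (1 - β) • z))
    {x y z : V} (hx : x ∈ X) (hy : y ∈ X) (hz : z ∈ X)
    (hxz : SPref R x z) (hxy : R x y) (hyz : R y z) :
    ∃! α : ℝ, α ∈ Set.Icc (0:ℝ) 1 ∧
      R y (α • x + (1 - α) • z) ∧ R (α • x + (1 - α) • z) y := by
  obtain ⟨α, hα, hyα, hαy⟩ :=
    exists_antisymmRel_mixture hX htrans htotal hind harch hx hy hz hxy hyz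
  refine ⟨α, ⟨hα, hyα, hαy⟩, fun β ⟨hβ, hyβ, hβy⟩ ↦ ?_⟩
  have weight_le {a b : ℝ} := IndependenceOn.weight_le_of_rel (a := a) (b := b)
    hind hX htrans hx hy hz hxz
  exact le_antisymm (weight_le hβ hα hyβ hαy) (weight_le hα hβ hyα hβy)
end

section
/- Let X be a convex subset of a real vector space and ≽ a total preorder on X satisfying the independence axiom and the Archimedean axiom. Then there exists an affine function u : X → ℝ such that x ≽ y if and only if u(x) ≥ u(y). (Existence part of the von Neumann–Morgenstern mixture-space theorem, the classical case of the paper's Theorem on conditionally affine representations.) -/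
/-!
The differences `x - y` with `x ≻ y` form a convex set `D` that misses `0`, and the Archimedean
axiom makes the cone over `D` relatively algebraically open: from any of its points one can move a
little against any of its directions without leaving it. The M. Riesz extension theorem on the span
of `D` therefore gives a linear functional that is strictly positive on `D`. It also respects
indifference: as soon as some strict preference exists, every weak preference `x ≽ y` is a limit of
strict preferences between points of segments issuing from `x` and `y`.
-/

section Cone

open Submodule

variable {V : Type*} [AddCommGroup V] [Module ℝ V]

theorem eq_zero_or_mem_of_mem_pointedConeHull {𝕜 M : Type*} [Semiring 𝕜] [PartialOrder 𝕜]
    [IsOrderedRing 𝕜] [AddCommMonoid M] [Module 𝕜 M] {C : ConvexCone 𝕜 M} {v : M}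
    (hv : v ∈ PointedCone.hull 𝕜 (C : Set M)) : v = 0 ∨ v ∈ C := by
  induction hv using span_induction with
  | mem v hv => exact .inr hv
  | zero => exact .inl rfl
  | add v w _ _ hv hw =>
    rcases hv with rfl | hv
    · rwa [zero_add]
    rcases hw with rfl | hw
    · rw [add_zero]
      exact .inr hv
    · exact .inr (C.add_mem hv hw)
  | smul c v _ hv =>
    rcases hv with rfl | hv
    · exact .inl (smul_zero c)
    rcases c.2.eq_or_lt with hc | hc
    · obtain rfl : c = 0 := Subtype.ext hc.symm
      exact .inl (zero_smul _ v)
    · exact .inr (C.smul_mem hc hv)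

theorem exists_dual_nonneg_of_orderUnit {C : ConvexCone ℝ V} (hC : C.Blunt) {e : V} (he : e ∈ C)
    (hunit : ∀ v, ∃ c : ℝ, c • e + v ∈ C) :
    ∃ g : Module.Dual ℝ V, g e = 1 ∧ ∀ v ∈ C, 0 ≤ g v := by
  have he₀ : e ≠ 0 := ne_of_mem_of_not_mem he hC
  let f : V →ₗ.[ℝ] ℝ := LinearPMap.mkSpanSingleton e (1 : ℝ) he₀
  have hf (c : ℝ) (hc : c • e ∈ f.domain) : f ⟨c • e, hc⟩ = c :=
    (LinearPMap.mkSpanSingleton'_apply _ _ _ _ _).trans (mul_one c)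
  have hf_nonneg : ∀ v : f.domain, (v : V) ∈ PointedCone.hull ℝ (C : Set V) → 0 ≤ f v := by
    rintro ⟨v, hv⟩ hvC
    obtain ⟨c, rfl⟩ := mem_span_singleton.1 hv
    rw [hf]
    by_contra! hc
    rcases eq_zero_or_mem_of_mem_pointedConeHull hvC with h | h
    · exact (smul_ne_zero hc.ne he₀) h
    · refine hC ?_
      convert C.add_mem h (C.smul_mem (neg_pos.2 hc) he) using 1
      module
  have hf_dense : ∀ v, ∃ w : f.domain, (w : V) + v ∈ PointedCone.hull ℝ (C : Set V) := fun v =>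
    let ⟨c, hc⟩ := hunit v
    ⟨⟨c • e, mem_span_singleton.2 ⟨c, rfl⟩⟩, PointedCone.subset_hull hc⟩
  obtain ⟨g, hgf, hg⟩ := riesz_extension _ f hf_nonneg hf_dense
  refine ⟨g, ?_, fun v hv => hg v (PointedCone.subset_hull hv)⟩
  exact (hgf ⟨e, mem_span_singleton_self e⟩).trans (LinearPMap.mkSpanSingleton_apply ℝ ℝ he₀ 1)

theorem exists_dual_pos_of_isReproducing {C : ConvexCone ℝ V} (hC : C.Blunt)
    (hgen : C.IsReproducing) (hopen : ∀ v ∈ C, ∀ w ∈ C, ∃ ε : ℝ, 0 < ε ∧ v - ε • w ∈ C) :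
    ∃ g : Module.Dual ℝ V, ∀ v ∈ C, 0 < g v := by
  obtain ⟨e, he, -, -, -⟩ := Set.eq_univ_iff_forall.1 hgen 0
  have hunit (v : V) : ∃ c : ℝ, c • e + v ∈ C := by
    obtain ⟨p, hp, q, hq, rfl⟩ := Set.eq_univ_iff_forall.1 hgen v
    obtain ⟨ε, hε, hmem⟩ := hopen e he q hq
    refine ⟨ε⁻¹, ?_⟩
    convert C.add_mem (C.smul_mem (inv_pos.2 hε) hmem) hp using 1
    match_scalars <;> field_simp
  obtain ⟨g, hge, hg⟩ := exists_dual_nonneg_of_orderUnit hC he hunit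
  refine ⟨g, fun v hv => ?_⟩
  obtain ⟨ε, hε, hmem⟩ := hopen v hv e he
  have hle : 0 ≤ g v - ε := by
    simpa only [map_sub, map_smul, hge, smul_eq_mul, mul_one] using hg _ hmem
  exact hε.trans_le (sub_nonneg.1 hle)

theorem exists_dual_pos_of_blunt {C : ConvexCone ℝ V} (hC : C.Blunt)
    (hopen : ∀ v ∈ C, ∀ w ∈ C, ∃ ε : ℝ, 0 < ε ∧ v - ε • w ∈ C) :
    ∃ g : Module.Dual ℝ V, ∀ v ∈ C, 0 < g v := by
  rcases (C : Set V).eq_empty_or_nonempty with hempty | ⟨e, he⟩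
  · exact ⟨0, fun v hv => (Set.eq_empty_iff_forall_notMem.1 hempty v hv).elim⟩
  let W := span ℝ (C : Set V)
  have : Nontrivial W :=
    ⟨⟨⟨e, subset_span he⟩, 0, fun h => ne_of_mem_of_not_mem he hC (congrArg Subtype.val h)⟩⟩
  have hgen : (C.comap W.subtype).IsReproducing :=
    .of_span_eq_top span_span_coe_preimage
  obtain ⟨g, hg⟩ := exists_dual_pos_of_isReproducing (C := C.comap W.subtype) hC hgen
    fun v hv w hw => hopen v hv w hw
  obtain ⟨G, rfl⟩ := g.exists_extend
  exact ⟨G, fun v hv => hg ⟨v, subset_span hv⟩ hv⟩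

theorem exists_dual_pos_of_convex {s : Set V} (hs : Convex ℝ s) (hs₀ : (0 : V) ∉ s)
    (hopen : ∀ v ∈ s, ∀ w ∈ s, ∃ ε : ℝ, 0 < ε ∧ v - ε • w ∈ ConvexCone.hull ℝ s) :
    ∃ g : Module.Dual ℝ V, ∀ v ∈ s, 0 < g v := by
  have hblunt : (ConvexCone.hull ℝ s).Blunt := by
    intro h
    obtain ⟨r, hr, v, hv, hrv⟩ := (ConvexCone.mem_hull_of_convex hs).1 h
    exact hs₀ ((smul_eq_zero_iff_right hr.ne').1 hrv ▸ hv)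
  have hopen' : ∀ v ∈ ConvexCone.hull ℝ s, ∀ w ∈ ConvexCone.hull ℝ s,
      ∃ ε : ℝ, 0 < ε ∧ v - ε • w ∈ ConvexCone.hull ℝ s := by
    intro v hv w hw
    obtain ⟨r, hr, v', hv', rfl⟩ := (ConvexCone.mem_hull_of_convex hs).1 hv
    obtain ⟨t, ht, w', hw', rfl⟩ := (ConvexCone.mem_hull_of_convex hs).1 hw
    obtain ⟨ε, hε, hmem⟩ := hopen v' hv' w' hw'
    refine ⟨r * ε / t, by positivity, ?_⟩
    convert (ConvexCone.hull ℝ s).smul_mem hr hmem using 1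
    match_scalars <;> field_simp
  obtain ⟨g, hg⟩ := exists_dual_pos_of_blunt hblunt hopen'
  exact ⟨g, fun v hv => hg v (ConvexCone.subset_hull hv)⟩

end Cone

theorem le_of_forall_mix_le_mix {𝕜 : Type*} [Field 𝕜] [LinearOrder 𝕜] [IsStrictOrderedRing 𝕜]
    [TopologicalSpace 𝕜] [OrderTopology 𝕜] {p p' q q' : 𝕜}
    (h : ∀ α ∈ Set.Ioo (0 : 𝕜) 1, α * p + (1 - α) * q ≤ α * p' + (1 - α) * q') : q ≤ q' := by
  have hzero : (0 : 𝕜) ∈ closure (Set.Ioo (0 : 𝕜) 1) := by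
    rw [closure_Ioo zero_ne_one]
    exact Set.left_mem_Icc.2 zero_le_one
  simpa using ContinuousWithinAt.closure_le hzero (Continuous.continuousWithinAt (by fun_prop))
    (Continuous.continuousWithinAt (by fun_prop)) h

/-- A complete and transitive preference relation on a convex set `X` that satisfies independence
and the upper half of the Archimedean axiom: if `x ≻ y ≻ z`, then some proper mixture of `x` and `z`
is still strictly preferred to `y`. -/
structure IsVNMPreference {V : Type*} [AddCommGroup V] [Module ℝ V] (X : Set V)
    (R : V → V → Prop) : Prop where
  convex : Convex ℝ X
  trans : ∀ x ∈ X, ∀ y ∈ X, ∀ z ∈ X, R x y → R y z → R x z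
  total : ∀ x ∈ X, ∀ y ∈ X, R x y ∨ R y x
  indep : ∀ x ∈ X, ∀ y ∈ X, ∀ z ∈ X, ∀ α ∈ Set.Ioo (0 : ℝ) 1,
    SPref R x y → SPref R (α • x + (1 - α) • z) (α • y + (1 - α) • z)
  arch : ∀ x ∈ X, ∀ y ∈ X, ∀ z ∈ X, SPref R x y → SPref R y z →
    ∃ α ∈ Set.Ioo (0 : ℝ) 1, SPref R (α • x + (1 - α) • z) y

/-- The set `D` of differences `x - y` of points of `X` with `x` strictly preferred to `y`; the
utility is a linear functional positive on `D`. -/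
def strictDifferences {V : Type*} [AddGroup V] (X : Set V) (R : V → V → Prop) : Set V :=
  {v | ∃ x ∈ X, ∃ y ∈ X, SPref R x y ∧ x - y = v}

theorem zero_notMem_strictDifferences {V : Type*} [AddGroup V] (X : Set V)
    (R : V → V → Prop) : (0 : V) ∉ strictDifferences X R := by
  rintro ⟨x, -, y, -, hxy, hv⟩
  obtain rfl := sub_eq_zero.1 hv
  exact hxy.2 hxy.1

namespace IsVNMPreference

variable {V : Type*} [AddCommGroup V] [Module ℝ V] {X : Set V} {R : V → V → Prop}
  {x y z x' y' : V} {α : ℝ}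

theorem mix_mem (h : IsVNMPreference X R) (hx : x ∈ X) (hy : y ∈ X) (hα : α ∈ Set.Ioo (0 : ℝ) 1) :
    α • x + (1 - α) • y ∈ X :=
  h.convex hx hy hα.1.le (sub_nonneg.2 hα.2.le) (add_sub_cancel α 1)

theorem spref_of_not (h : IsVNMPreference X R) (hx : x ∈ X) (hy : y ∈ X) (hxy : ¬ R x y) :
    SPref R y x :=
  ⟨(h.total x hx y hy).resolve_left hxy, hxy⟩

theorem spref_of_pref_of_spref (h : IsVNMPreference X R) (hx : x ∈ X) (hy : y ∈ X) (hz : z ∈ X)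
    (hxy : R x y) (hyz : SPref R y z) : SPref R x z :=
  ⟨h.trans x hx y hy z hz hxy hyz.1, fun hzx => hyz.2 (h.trans z hz x hx y hy hzx hxy)⟩

theorem spref_of_spref_of_pref (h : IsVNMPreference X R) (hx : x ∈ X) (hy : y ∈ X) (hz : z ∈ X)
    (hxy : SPref R x y) (hyz : R y z) : SPref R x z :=
  ⟨h.trans x hx y hy z hz hxy.1 hyz, fun hzx => hxy.2 (h.trans y hy z hz x hx hyz hzx)⟩

theorem indep_right (h : IsVNMPreference X R) (hx : x ∈ X) (hy : y ∈ X) (hz : z ∈ X)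
    (hα : α ∈ Set.Ioo (0 : ℝ) 1) (hxy : SPref R x y) :
    SPref R (α • z + (1 - α) • x) (α • z + (1 - α) • y) := by
  have key := h.indep x hx y hy z hz (1 - α) ⟨sub_pos.2 hα.2, sub_lt_self 1 hα.1⟩ hxy
  rwa [sub_sub_cancel, add_comm, add_comm ((1 - α) • y)] at key

theorem mix_spref_mix (h : IsVNMPreference X R) (hx : x ∈ X) (hy : y ∈ X) (hx' : x' ∈ X)
    (hy' : y' ∈ X) (hα : α ∈ Set.Ioo (0 : ℝ) 1) (hxy : SPref R x y) (hxy' : SPref R x' y') :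
    SPref R (α • x + (1 - α) • x') (α • y + (1 - α) • y') :=
  h.spref_of_spref_of_pref (h.mix_mem hx hx' hα) (h.mix_mem hy hx' hα) (h.mix_mem hy hy' hα)
    (h.indep x hx y hy x' hx' α hα hxy) (h.indep_right hx' hy' hy hα hxy').1

theorem mix_spref_of_spref (h : IsVNMPreference X R) (hx : x ∈ X) (hy : y ∈ X)
    (hα : α ∈ Set.Ioo (0 : ℝ) 1) (hxy : SPref R x y) : SPref R (α • x + (1 - α) • y) y := by
  simpa only [Convex.combo_self (add_sub_cancel α 1)] using h.indep x hx y hy y hy α hα hxy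

theorem spref_mix_of_spref (h : IsVNMPreference X R) (hx : x ∈ X) (hy : y ∈ X)
    (hα : α ∈ Set.Ioo (0 : ℝ) 1) (hxy : SPref R x y) : SPref R x (α • y + (1 - α) • x) := by
  simpa only [Convex.combo_self (add_sub_cancel α 1)] using h.indep x hx y hy x hx α hα hxy

theorem convex_strictDifferences (h : IsVNMPreference X R) :
    Convex ℝ (strictDifferences X R) := by
  rw [convex_iff_forall_pos]
  rintro _ ⟨x, hx, y, hy, hxy, rfl⟩ _ ⟨x', hx', y', hy', hxy', rfl⟩ α β hα hβ hαβ
  obtain rfl : β = 1 - α := eq_sub_of_add_eq' hαβ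
  have hα' : α ∈ Set.Ioo (0 : ℝ) 1 := ⟨hα, sub_pos.1 hβ⟩
  exact ⟨_, h.mix_mem hx hx' hα', _, h.mix_mem hy hy' hα',
    h.mix_spref_mix hx hy hx' hy' hα' hxy hxy', by module⟩

theorem exists_mix_spref (h : IsVNMPreference X R) (hx : x ∈ X) (hy : y ∈ X) (hz : z ∈ X)
    (hxy : SPref R x y) (hxz : SPref R x z) :
    ∃ α ∈ Set.Ioo (0 : ℝ) 1, SPref R (α • x + (1 - α) • z) y := by
  by_cases hzy : R z y
  · have half : (1 / 2 : ℝ) ∈ Set.Ioo (0 : ℝ) 1 := by norm_num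
    exact ⟨1 / 2, half, h.spref_of_spref_of_pref (h.mix_mem hx hz half) hz hy
      (h.mix_spref_of_spref hx hz half hxz) hzy⟩
  · exact h.arch x hx y hy z hz hxy (h.spref_of_not hz hy hzy)

theorem exists_sub_smul_mem_hull_strictDifferences (h : IsVNMPreference X R) {v w : V}
    (hv : v ∈ strictDifferences X R) (hw : w ∈ strictDifferences X R) :
    ∃ ε : ℝ, 0 < ε ∧ v - ε • w ∈ ConvexCone.hull ℝ (strictDifferences X R) := by
  obtain ⟨x, hx, y, hy, hxy, rfl⟩ := hv
  obtain ⟨x', hx', y', hy', hxy', rfl⟩ := hw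
  have half : (1 / 2 : ℝ) ∈ Set.Ioo (0 : ℝ) 1 := by norm_num
  have hmid_xx' := h.mix_mem hx hx' half
  have hmid_xy' := h.mix_mem hx hy' half
  have hmid_yx' := h.mix_mem hy hx' half
  -- Tilting the midpoint of `x, x'` towards that of `x, y'` moves `v / 2` against `w / 2`.
  obtain ⟨α, hα, hmix⟩ := h.exists_mix_spref hmid_xx' hmid_yx' hmid_xy'
    (h.indep x hx y hy x' hx' _ half hxy) (h.indep_right hx' hy' hx half hxy')
  refine ⟨1 - α, sub_pos.2 hα.2, ?_⟩
  convert (ConvexCone.hull ℝ (strictDifferences X R)).smul_mem two_pos (ConvexCone.subset_hull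
    ⟨_, h.mix_mem hmid_xx' hmid_xy' hα, _, hmid_yx', hmix, rfl⟩) using 1
  module

theorem exists_dual_strictMono (h : IsVNMPreference X R) :
    ∃ g : Module.Dual ℝ V, ∀ x ∈ X, ∀ y ∈ X, SPref R x y → g y < g x := by
  obtain ⟨g, hg⟩ := exists_dual_pos_of_convex h.convex_strictDifferences
    (zero_notMem_strictDifferences X R)
    fun _ hv _ hw => h.exists_sub_smul_mem_hull_strictDifferences hv hw
  refine ⟨g, fun x hx y hy hxy => sub_pos.1 ?_⟩
  rw [← map_sub]
  exact hg _ ⟨x, hx, y, hy, hxy, rfl⟩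

theorem exists_forall_mix_spref_mix (h : IsVNMPreference X R) {a b : V} (ha : a ∈ X) (hb : b ∈ X)
    (hab : SPref R a b) (hx : x ∈ X) (hy : y ∈ X) (hxy : R x y) :
    ∃ p ∈ X, ∃ q ∈ X, ∀ α ∈ Set.Ioo (0 : ℝ) 1,
      SPref R (α • p + (1 - α) • x) (α • q + (1 - α) • y) := by
  by_cases hxa : R x a
  · have hxb := h.spref_of_pref_of_spref hx ha hb hxa hab
    by_cases hby : R b y
    · refine ⟨x, hx, y, hy, fun α _ => ?_⟩
      simpa only [Convex.combo_self (add_sub_cancel α 1)] using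
        h.spref_of_spref_of_pref hx hb hy hxb hby
    · refine ⟨x, hx, b, hb, fun α hα => ?_⟩
      rw [Convex.combo_self (add_sub_cancel α 1)]
      exact h.spref_of_pref_of_spref hx hy (h.mix_mem hb hy hα) hxy
        (h.spref_mix_of_spref hy hb hα (h.spref_of_not hb hy hby))
  · refine ⟨a, ha, y, hy, fun α hα => ?_⟩
    rw [Convex.combo_self (add_sub_cancel α 1) y]
    exact h.spref_of_spref_of_pref (h.mix_mem ha hx hα) hx hy
      (h.mix_spref_of_spref ha hx hα (h.spref_of_not hx ha hxa)) hxy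

theorem le_of_pref (h : IsVNMPreference X R) {g : Module.Dual ℝ V}
    (hg : ∀ x ∈ X, ∀ y ∈ X, SPref R x y → g y < g x) {a b : V} (ha : a ∈ X) (hb : b ∈ X)
    (hab : SPref R a b) (hx : x ∈ X) (hy : y ∈ X) (hxy : R x y) : g y ≤ g x := by
  obtain ⟨p, hp, q, hq, hpq⟩ := h.exists_forall_mix_spref_mix ha hb hab hx hy hxy
  refine le_of_forall_mix_le_mix (p := g q) (p' := g p) fun α hα => ?_
  simpa only [map_add, map_smul, smul_eq_mul] using
    (hg _ (h.mix_mem hp hx hα) _ (h.mix_mem hq hy hα) (hpq α hα)).le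

end IsVNMPreference

theorem vonNeumann_morgenstern_affine_representation_general
    {V : Type*} [AddCommGroup V] [Module ℝ V] {X : Set V} {R : V → V → Prop}
    (h : IsVNMPreference X R) :
    ∃ g : Module.Dual ℝ V, ∀ x ∈ X, ∀ y ∈ X, (R x y ↔ g y ≤ g x) := by
  by_cases hstrict : ∃ a ∈ X, ∃ b ∈ X, SPref R a b
  · obtain ⟨a, ha, b, hb, hab⟩ := hstrict
    obtain ⟨g, hg⟩ := h.exists_dual_strictMono
    refine ⟨g, fun x hx y hy => ⟨h.le_of_pref hg ha hb hab hx hy, fun hle => ?_⟩⟩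
    by_contra hxy
    exact hle.not_gt (hg y hy x hx (h.spref_of_not hx hy hxy))
  · refine ⟨0, fun x hx y hy => ⟨fun _ => le_rfl, fun _ => ?_⟩⟩
    by_contra hxy
    exact hstrict ⟨y, hy, x, hx, h.spref_of_not hx hy hxy⟩

/-- von Neumann–Morgenstern (existence part): a total preorder on a convex set
satisfying independence and the Archimedean axiom admits an affine utility
representation. -/
theorem vonNeumann_morgenstern_affine_representation
    {V : Type*} [AddCommGroup V] [Module ℝ V] (X : Set V) (hX : Convex ℝ X)
    (R : V → V → Prop)
    (hrefl : ∀ x ∈ X, R x x)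
    (htrans : ∀ x ∈ X, ∀ y ∈ X, ∀ z ∈ X, R x y → R y z → R x z)
    (htotal : ∀ x ∈ X, ∀ y ∈ X, R x y ∨ R y x)
    (hind : ∀ x ∈ X, ∀ y ∈ X, ∀ z ∈ X, ∀ α : ℝ, 0 < α → α ≤ 1 →
      SPref R x y → SPref R (α • x + (1 - α) • z) (α • y + (1 - α) • z))
    (harch : ∀ x ∈ X, ∀ y ∈ X, ∀ z ∈ X, SPref R x y → SPref R y z →
      ∃ α ∈ Set.Ioo (0:ℝ) 1, ∃ β ∈ Set.Ioo (0:ℝ) 1,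
        SPref R (α • x + (1 - α) • z) y ∧ SPref R y (β • x + (1 - β) • z)) :
    ∃ u : V → ℝ,
      (∀ x ∈ X, ∀ y ∈ X, ∀ α ∈ Set.Icc (0:ℝ) 1,
        u (α • x + (1 - α) • y) = α * u x + (1 - α) * u y) ∧
      (∀ x ∈ X, ∀ y ∈ X, (R x y ↔ u y ≤ u x)) := by
  have h : IsVNMPreference X R :=
    { convex := hX
      trans := htrans
      total := htotal
      indep := fun x hx y hy z hz α hα => hind x hx y hy z hz α hα.1 hα.2.le
      arch := fun x hx y hy z hz hxy hyz =>
        let ⟨α, hα, _, _, hmix, _⟩ := harch x hx y hy z hz hxy hyz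
        ⟨α, hα, hmix⟩ }
  obtain ⟨g, hg⟩ := vonNeumann_morgenstern_affine_representation_general h
  exact ⟨g, fun x _ y _ α _ => by simp only [map_add, map_smul, smul_eq_mul], hg⟩
end

section
/- Let P(ℝ) be the set of Borel probability measures on ℝ equipped with the topology of weak convergence (the topology of convergence of integrals of bounded continuous functions), and let ≽ be a total preorder on P(ℝ) satisfying the independence axiom and the Archimedean axiom (with respect to convex combinations of measures) which is continuous for the weak topology (all upper and lower contour sets are closed). Then there exists a bounded continuous function u : ℝ → ℝ such that for all μ, ν ∈ P(ℝ): μ ≽ ν if and only if ∫ u dμ ≥ ∫ u dν; moreover u is unique up to transformations u ↦ a·u + b with a > 0 and b ∈ ℝ. (Classical case of the paper's conditional von Neumann–Morgenstern representation theorem.) -/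
open MeasureTheory

/-- The convex combination `α μ + (1-α) ν` of two Borel probability measures on ℝ,
as a measure. -/
noncomputable def mixMeasure (α : ℝ) (μ ν : ProbabilityMeasure ℝ) : Measure ℝ :=
  ENNReal.ofReal α • (μ : Measure ℝ) + ENNReal.ofReal (1 - α) • (ν : Measure ℝ)

/-! Normalise a prospective utility to `1 / 2` and `-1 / 2` on a strictly ranked pair `x ≻ y`.
Contracting a lottery far enough towards the midpoint of the segment from `y` to `x` brings it
between `y` and `x`, where it is indifferent to a unique point of the segment; undoing the
contraction on the coordinate of that point gives an affine utility on all lotteries. Its range is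
an interval, so closed contour sets force weak continuity. Mixing with a small weight moves a
lottery weakly little, uniformly in the other component, so a continuous affine utility is bounded;
and since finitely supported lotteries are weakly dense, it is the integral of its values on Dirac
masses. Two affine functions inducing the same order differ by a positive affine map. -/

noncomputable section

open Set Filter Topology TopologicalSpace Convexity unitInterval BoundedContinuousFunction

namespace VonNeumannMorgenstern

lemma exists_pos_of_eventually_nhds_zero {p : I → Prop} (hp : ∀ᶠ t in 𝓝 0, p t) :
    ∃ t, 0 < t ∧ p t := by
  have hne : (𝓝[>] (0 : I)).NeBot := nhdsGT_neBot_of_exists_gt ⟨1, zero_lt_one⟩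
  exact hne.nonempty_of_mem (inter_mem self_mem_nhdsWithin (nhdsWithin_le_nhds hp))

section Mix

variable {M : Type*} [ConvexSpace ℝ M] {U : M → ℝ}

/-- The convex combination `t x + (1 - t) y` in a convex space, with the coefficient bundled in the
unit interval so that continuity in `t` can be expressed. -/
def mix (t : I) (x y : M) : M :=
  convexCombPair (t : ℝ) (1 - t) (nonneg t) (one_minus_nonneg t) (add_sub_cancel _ _) x y

lemma mix_zero (x y : M) : mix 0 x y = y := by
  simp [mix]

lemma mix_one (x y : M) : mix 1 x y = x := by
  simp [mix]

lemma mix_self (t : I) (x : M) : mix t x x = x :=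
  convexCombPair_same _ _ _

lemma mix_symm (t : I) (x y : M) : mix (σ t) y x = mix t x y := by
  simp only [mix, coe_symm_eq, sub_sub_cancel]
  exact convexCombPair_symm _ _ _

lemma exists_coe_eq_mix (a b c : I) : ∃ d : I, (d : ℝ) = c * a + (1 - c) * b :=
  ⟨⟨c * a + (1 - c) * b, convex_Icc (0 : ℝ) 1 a.2 b.2 (nonneg c) (one_minus_nonneg c)
    (add_sub_cancel _ _)⟩, rfl⟩

lemma mix_mix_same {a b c d : I} (h : (d : ℝ) = c * a + (1 - c) * b) (x y : M) :
    mix c (mix a x y) (mix b x y) = mix d x y := by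
  simp only [mix]
  rw [convexCombPair, convexCombPair, convexCombPair, convexCombPair, ← convexCombPair,
    ← sConvexComb_convexCombPair]
  congr 1
  rw [← StdSimplex.weights_inj]
  simp only [StdSimplex.weights_convexCombPair, StdSimplex.weights_duple, smul_add,
    Finsupp.smul_single, smul_eq_mul]
  rw [add_add_add_comm, ← Finsupp.single_add, ← Finsupp.single_add, h]
  congr 2
  ring

lemma mix_mix_right {a b c : I} (h : (c : ℝ) = a * b) (x y : M) :
    mix a (mix b x y) y = mix c x y := by
  simpa only [mix_zero] using mix_mix_same (b := 0) (by simpa using h) x y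

lemma mix_mix_mix_comm (t c : I) (x y z w : M) :
    mix t (mix c x y) (mix c z w) = mix c (mix t x z) (mix t y w) := by
  have h := iConvexComb_convexCombPair_comm (nonneg t) (one_minus_nonneg t) (add_sub_cancel _ _)
    (.duple true false (nonneg c) (one_minus_nonneg c) (add_sub_cancel _ _))
    (fun i ↦ if i then x else y) (fun i ↦ if i then z else w)
  simpa [StdSimplex.iConvexComb] using! h.symm

lemma mix_mix_right_distrib (t c : I) (x y z : M) :
    mix t (mix c x y) z = mix c (mix t x z) (mix t y z) := by
  simpa only [mix_self] using mix_mix_mix_comm t c x y z z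

lemma map_mix (hU : IsAffineMap ℝ U) (t : I) (x y : M) :
    U (mix t x y) = t * U x + (1 - t) * U y := by
  rw [mix, hU.map_convexCombPair, convexCombPair_eq_sum, smul_eq_mul, smul_eq_mul]

lemma isAffineMap_of_map_mix (hU : ∀ (t : I) x y, U (mix t x y) = t * U x + (1 - t) * U y) :
    IsAffineMap ℝ U := by
  have hgraph : IsConvexSet ℝ {p : M × ℝ | U p.1 = p.2} := by
    refine .of_convexCombPair_mem fun a b ha hb hab p (hp : U p.1 = p.2) q (hq : U q.1 = q.2) ↦ ?_
    obtain rfl := eq_sub_of_add_eq' hab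
    rw [mem_ofPred_eq, Prod.fst_convexCombPair, Prod.snd_convexCombPair,
      convexCombPair_eq_sum (x := p.2), ← hp, ← hq]
    exact hU ⟨a, ha, sub_nonneg.1 hb⟩ p.1 q.1
  refine ⟨fun w ↦ ?_⟩
  have h : w.iConvexComb (fun x ↦ (x, U x)) ∈ {p : M × ℝ | U p.1 = p.2} :=
    hgraph.iConvexComb_mem fun _ _ ↦ rfl
  rwa [mem_ofPred_eq, Prod.fst_iConvexComb, Prod.snd_iConvexComb, iConvexComb_id'] at h

end Mix

/-- The Herstein–Milnor conditions on a preference `R` over a convex space: a total preorder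
satisfying independence whose contour sets meet every segment in a closed set. -/
structure IsMixturePreference {M : Type*} [ConvexSpace ℝ M] (R : M → M → Prop) : Prop where
  trans : ∀ {x y z}, R x y → R y z → R x z
  total : ∀ x y, R x y ∨ R y x
  mix_strict : ∀ {x y} (z) {t : I}, 0 < t → SPref R x y → SPref R (mix t x z) (mix t y z)
  isClosed_mix_le : ∀ x y z, IsClosed {t : I | R (mix t x y) z}
  isClosed_le_mix : ∀ x y z, IsClosed {t : I | R z (mix t x y)}

namespace IsMixturePreference

variable {M : Type*} [ConvexSpace ℝ M] {R : M → M → Prop} {x y z w : M}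

lemma refl (h : IsMixturePreference R) (x : M) : R x x :=
  (h.total x x).elim id id

lemma strict_of_not (h : IsMixturePreference R) (hxy : ¬ R x y) : SPref R y x :=
  ⟨(h.total x y).resolve_left hxy, hxy⟩

lemma strict_trans_left (h : IsMixturePreference R) (hxy : SPref R x y) (hyz : R y z) :
    SPref R x z :=
  ⟨h.trans hxy.1 hyz, fun hzx ↦ hxy.2 (h.trans hyz hzx)⟩

lemma dual (h : IsMixturePreference R) : IsMixturePreference (flip R) where
  trans hxy hyz := h.trans hyz hxy
  total x y := h.total y x
  mix_strict z _ ht hxy := h.mix_strict z ht hxy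
  isClosed_mix_le := h.isClosed_le_mix
  isClosed_le_mix := h.isClosed_mix_le

lemma mix_le_mix_of_strict (h : IsMixturePreference R) {v : M} (hv : SPref R v z) (η : M)
    {t : I} (ht : 0 < t) (hzw : R z w) : R (mix t z η) (mix t w η) := by
  have hmem : ∀ ε : I, 0 < ε → R (mix ε (mix t v η) (mix t z η)) (mix t w η) := fun ε hε ↦ by
    have hvz := h.mix_strict z hε hv
    rw [mix_self] at hvz
    rw [← mix_mix_right_distrib]
    exact (h.mix_strict η ht (h.strict_trans_left hvz hzw)).1
  have hzero : (0 : I) ∈ closure (Ioi 0) := by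
    rw [closure_Ioi' ⟨1, zero_lt_one⟩]
    exact self_mem_Ici
  have hlim := (h.isClosed_mix_le _ _ _).closure_subset_iff.2 hmem hzero
  rwa [mem_ofPred_eq, mix_zero] at hlim

lemma mix_le_mix_left (h : IsMixturePreference R) (t : I) (η : M) (hzw : R z w) :
    R (mix t z η) (mix t w η) := by
  rcases (nonneg' (t := t)).eq_or_lt with rfl | ht
  · simpa only [mix_zero] using h.refl η
  by_contra hmix
  have hwz : R w z := by
    by_contra hwz
    exact hmix (h.mix_strict η ht ⟨hzw, hwz⟩).1
  by_cases hw : R (mix t z η) w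
  · have hz : SPref R (mix t w η) z :=
      h.strict_trans_left (h.strict_of_not hmix) (h.trans hw hwz)
    exact hmix (h.mix_le_mix_of_strict hz η ht hzw)
  · exact hmix (h.dual.mix_le_mix_of_strict (h.strict_of_not hw) η ht hzw)

lemma mix_le_mix (h : IsMixturePreference R) (t : I) (hxz : R x z) (hyw : R y w) :
    R (mix t x y) (mix t z w) := by
  refine h.trans (h.mix_le_mix_left t y hxz) ?_
  rw [← mix_symm t z y, ← mix_symm t z w]
  exact h.mix_le_mix_left (σ t) z hyw

lemma mix_le_mix_iff_left (h : IsMixturePreference R) {t : I} (ht : 0 < t) (η : M) :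
    R (mix t z η) (mix t w η) ↔ R z w := by
  refine ⟨fun hmix ↦ ?_, h.mix_le_mix_left t η⟩
  by_contra hzw
  exact (h.mix_strict η ht (h.strict_of_not hzw)).2 hmix

lemma antisymmRel_mix (h : IsMixturePreference R) (t : I) (hxz : AntisymmRel R x z)
    (hyw : AntisymmRel R y w) : AntisymmRel R (mix t x y) (mix t z w) :=
  ⟨h.mix_le_mix t hxz.1 hyw.1, h.mix_le_mix t hxz.2 hyw.2⟩

lemma strict_mix_right (h : IsMixturePreference R) (hxy : SPref R x y) {b : I} (hb : 0 < b) :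
    SPref R (mix b x y) y := by
  simpa only [mix_self] using h.mix_strict y hb hxy

lemma strict_mix_left (h : IsMixturePreference R) (hxy : SPref R x y) {b : I} (hb : b < 1) :
    SPref R x (mix b x y) := by
  have hb' : 0 < σ b := sub_pos.2 (Subtype.coe_lt_coe.2 hb)
  rw [← mix_symm]
  exact h.dual.strict_mix_right hxy hb'

lemma strict_mix_mix (h : IsMixturePreference R) (hxy : SPref R x y) {a b : I} (hab : a < b) :
    SPref R (mix b x y) (mix a x y) := by
  have hb : (0 : ℝ) < b := (nonneg a).trans_lt hab
  let c : I := ⟨a / b, unitInterval.div_mem (nonneg a) (nonneg b) hab.le⟩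
  have hc : c < 1 := (div_lt_one hb).2 hab
  rw [← mix_mix_right (a := c) (div_mul_cancel₀ _ hb.ne').symm]
  exact h.strict_mix_left (h.strict_mix_right hxy hb) hc

lemma mix_le_mix_iff_le (h : IsMixturePreference R) (hxy : SPref R x y) {a b : I} :
    R (mix a x y) (mix b x y) ↔ b ≤ a := by
  rcases lt_trichotomy a b with hlt | rfl | hlt
  · exact iff_of_false (h.strict_mix_mix hxy hlt).2 hlt.not_ge
  · exact iff_of_true (h.refl _) le_rfl
  · exact iff_of_true (h.strict_mix_mix hxy hlt).1 hlt.le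

lemma exists_antisymmRel_mix (h : IsMixturePreference R) (hxz : R x z) (hzy : R z y) :
    ∃ a : I, AntisymmRel R z (mix a x y) := by
  have hinter := isPreconnected_closed_iff.1 (isPreconnected_univ (α := I))
    _ _ (h.isClosed_le_mix x y z) (h.isClosed_mix_le x y z) (fun a _ ↦ h.total _ _)
    ⟨0, trivial, by rwa [mem_ofPred_eq, mix_zero]⟩ ⟨1, trivial, by rwa [mem_ofPred_eq, mix_one]⟩
  obtain ⟨a, -, ha⟩ := hinter
  exact ⟨a, ha⟩

lemma exists_mix_between (h : IsMixturePreference R) (hxw : SPref R x w) (hwy : SPref R w y)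
    (z : M) : ∃ t : I, 0 < t ∧ R x (mix t z w) ∧ R (mix t z w) y := by
  have hlt : ∀ᶠ t : I in 𝓝 0, ¬ R (mix t z w) x :=
    (h.isClosed_mix_le z w x).isOpen_compl.eventually_mem (by simpa [mix_zero] using hxw.2)
  have hgt : ∀ᶠ t : I in 𝓝 0, ¬ R y (mix t z w) :=
    (h.isClosed_le_mix z w y).isOpen_compl.eventually_mem (by simpa [mix_zero] using hwy.2)
  obtain ⟨t, ht, ht_lt, ht_gt⟩ := exists_pos_of_eventually_nhds_zero (hlt.and hgt)
  exact ⟨t, ht, (h.strict_of_not ht_lt).1, (h.strict_of_not ht_gt).1⟩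

end IsMixturePreference

/-- The midpoint of the unit interval. -/
def half : I := ⟨1 / 2, by norm_num, by norm_num⟩

lemma coe_half : (half : ℝ) = 1 / 2 := rfl

/-- `r` is the utility of `z` when utility is normalised to `1 / 2` at `x` and `-1 / 2` at `y`.
The number `t` is the ratio of a contraction towards the midpoint of `x` and `y` that brings `z`
between them, so that it can be compared with a point of the segment. -/
def IsUtility {M : Type*} [ConvexSpace ℝ M] (R : M → M → Prop) (x y z : M) (r : ℝ) (t : I) :
    Prop :=
  0 < t ∧ ∃ a : I, (a : ℝ) = t * r + 1 / 2 ∧ AntisymmRel R (mix t z (mix half x y)) (mix a x y)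

namespace IsMixturePreference

variable {M : Type*} [ConvexSpace ℝ M] {R : M → M → Prop} {x y z w : M} {r q : ℝ} {s t : I}

lemma exists_isUtility (h : IsMixturePreference R) (hxy : SPref R x y) (z : M) :
    ∃ r t, IsUtility R x y z r t := by
  have hhalf_pos : (0 : I) < half := half_pos (zero_lt_one' ℝ)
  have hhalf_lt : half < 1 := half_lt_self (zero_lt_one' ℝ)
  obtain ⟨t, ht, hxz, hzy⟩ := h.exists_mix_between (h.strict_mix_left hxy hhalf_lt)
    (h.strict_mix_right hxy hhalf_pos) z
  obtain ⟨a, ha⟩ := h.exists_antisymmRel_mix hxz hzy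
  have ht' : (t : ℝ) ≠ 0 := ne_of_gt ht
  exact ⟨(a - 1 / 2) / t, t, ht, a, by field_simp; ring, ha⟩

lemma isUtility_of_le (h : IsMixturePreference R) (hz : IsUtility R x y z r t) (hs : 0 < s)
    (hst : s ≤ t) : IsUtility R x y z r s := by
  obtain ⟨ht, a, ha, hza⟩ := hz
  let c : I := ⟨s / t, unitInterval.div_mem (nonneg s) (nonneg t) hst⟩
  have hct : (s : ℝ) = c * t := (div_mul_cancel₀ _ (ne_of_gt ht)).symm
  obtain ⟨d, hd⟩ := exists_coe_eq_mix a half c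
  have hmix := h.antisymmRel_mix c hza ⟨h.refl (mix half x y), h.refl _⟩
  rw [mix_mix_right hct, mix_mix_same hd] at hmix
  refine ⟨hs, d, ?_, hmix⟩
  rw [hd, ha, coe_half, hct]
  ring

lemma isUtility_le_iff (h : IsMixturePreference R) (hxy : SPref R x y)
    (hz : IsUtility R x y z r t) (hw : IsUtility R x y w q s) : R z w ↔ q ≤ r := by
  have hmin : 0 < min t s := lt_min hz.1 hw.1
  obtain ⟨ht, a, ha, hza⟩ := h.isUtility_of_le hz hmin (min_le_left _ _)
  obtain ⟨-, b, hb, hwb⟩ := h.isUtility_of_le hw hmin (min_le_right _ _)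
  calc R z w ↔ R (mix (min t s) z (mix half x y)) (mix (min t s) w (mix half x y)) :=
        (h.mix_le_mix_iff_left ht _).symm
    _ ↔ R (mix a x y) (mix b x y) :=
        ⟨fun hR ↦ h.trans hza.2 (h.trans hR hwb.1), fun hR ↦ h.trans hza.1 (h.trans hR hwb.2)⟩
    _ ↔ b ≤ a := h.mix_le_mix_iff_le hxy
    _ ↔ q ≤ r := by
      rw [← Subtype.coe_le_coe, ha, hb, add_le_add_iff_right,
        mul_le_mul_iff_right₀ (Subtype.coe_lt_coe.2 ht)]

lemma isUtility_mix (h : IsMixturePreference R) (hz : IsUtility R x y z r t)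
    (hw : IsUtility R x y w q s) (c : I) :
    IsUtility R x y (mix c z w) (c * r + (1 - c) * q) (min t s) := by
  have hmin : 0 < min t s := lt_min hz.1 hw.1
  obtain ⟨ht, a, ha, hza⟩ := h.isUtility_of_le hz hmin (min_le_left _ _)
  obtain ⟨-, b, hb, hwb⟩ := h.isUtility_of_le hw hmin (min_le_right _ _)
  obtain ⟨d, hd⟩ := exists_coe_eq_mix a b c
  have hmix := h.antisymmRel_mix c hza hwb
  rw [← mix_mix_right_distrib, mix_mix_same hd] at hmix
  refine ⟨ht, d, ?_, hmix⟩
  rw [hd, ha, hb]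
  ring

theorem exists_affine_utility (h : IsMixturePreference R) :
    ∃ U : M → ℝ, IsAffineMap ℝ U ∧ ∀ x y, R x y ↔ U y ≤ U x := by
  by_cases hxy : ∃ x y, SPref R x y
  · obtain ⟨x, y, hxy⟩ := hxy
    choose U t hU using h.exists_isUtility hxy
    refine ⟨U, isAffineMap_of_map_mix fun c z w ↦ ?_,
      fun z w ↦ h.isUtility_le_iff hxy (hU z) (hU w)⟩
    have hmix := h.isUtility_mix (hU z) (hU w) c
    exact le_antisymm ((h.isUtility_le_iff hxy hmix (hU _)).1 (h.refl _))
      ((h.isUtility_le_iff hxy (hU _) hmix).1 (h.refl _))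
  · refine ⟨fun _ ↦ 0, .const 0, fun x y ↦ iff_of_true ?_ le_rfl⟩
    by_contra hyx
    exact hxy ⟨y, x, h.strict_of_not hyx⟩

end IsMixturePreference

section AffineUtility

variable {M : Type*} [ConvexSpace ℝ M] {U V : M → ℝ}

lemma ordConnected_range_of_isAffineMap (hU : IsAffineMap ℝ U) : (range U).OrdConnected := by
  refine Convex.ordConnected ?_
  rintro _ ⟨x, rfl⟩ _ ⟨y, rfl⟩ a b ha hb hab
  refine ⟨convexCombPair a b ha hb hab x y, ?_⟩
  rw [hU.map_convexCombPair, convexCombPair_eq_sum]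

lemma sub_mul_eq_of_le_iff_le (hU : IsAffineMap ℝ U) (hV : IsAffineMap ℝ V)
    (hUV : ∀ x y, U x ≤ U y ↔ V x ≤ V y) {x y z : M} (hxy : U x ≤ U y) (hyz : U y ≤ U z) :
    (U z - U x) * (V y - V x) = (U y - U x) * (V z - V x) := by
  have heq : ∀ {p q : M}, U p = U q → V p = V q := fun hpq ↦
    ((hUV _ _).1 hpq.le).antisymm ((hUV _ _).1 hpq.ge)
  rcases (hxy.trans hyz).eq_or_lt with hxz | hxz
  · have hy : U y = U x := hxy.antisymm' (hyz.trans hxz.ge)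
    rw [hy, hxz]
    ring
  · have hne : U z - U x ≠ 0 := (sub_pos.2 hxz).ne'
    let t : I := ⟨(U y - U x) / (U z - U x), unitInterval.div_mem (sub_nonneg.2 hxy)
      (sub_pos.2 hxz).le (sub_le_sub_right hyz _)⟩
    have ht : (t : ℝ) * (U z - U x) = U y - U x := div_mul_cancel₀ _ hne
    have hVy : V y = t * V z + (1 - t) * V x := by
      rw [← map_mix hV]
      refine heq ?_
      rw [map_mix hU]
      linear_combination -ht
    rw [hVy]
    linear_combination (V z - V x) * ht

theorem exists_pos_eq_mul_add_of_le_iff_le (hU : IsAffineMap ℝ U) (hV : IsAffineMap ℝ V)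
    (hUV : ∀ x y, U x ≤ U y ↔ V x ≤ V y) : ∃ a, 0 < a ∧ ∃ b, ∀ x, V x = a * U x + b := by
  by_cases hlt : ∃ x y, U x < U y
  · obtain ⟨x, y, hxy⟩ := hlt
    have hU0 : 0 < U y - U x := sub_pos.2 hxy
    have hV0 : V x < V y := by
      rw [← not_le, ← hUV]
      exact hxy.not_ge
    have hkey : ∀ z, (U y - U x) * (V z - V x) = (U z - U x) * (V y - V x) := fun z ↦ by
      rcases le_total (U z) (U x) with hzx | hxz
      · linear_combination -sub_mul_eq_of_le_iff_le hU hV hUV hzx hxy.le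
      rcases le_total (U z) (U y) with hzy | hyz
      · exact sub_mul_eq_of_le_iff_le hU hV hUV hxz hzy
      · exact (sub_mul_eq_of_le_iff_le hU hV hUV hxy.le hyz).symm
    refine ⟨(V y - V x) / (U y - U x), div_pos (sub_pos.2 hV0) hU0,
      V x - (V y - V x) / (U y - U x) * U x, fun z ↦ ?_⟩
    field_simp
    linear_combination hkey z
  · push Not at hlt
    rcases isEmpty_or_nonempty M with hM | ⟨⟨x⟩⟩
    · exact ⟨1, one_pos, 0, fun x ↦ hM.elim x⟩
    · refine ⟨1, one_pos, V x - U x, fun y ↦ ?_⟩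
      have hVy : V y = V x := ((hUV _ _).1 (hlt _ _)).antisymm ((hUV _ _).1 (hlt _ _))
      have hUy : U y = U x := (hlt _ _).antisymm (hlt _ _)
      linear_combination hVy - hUy

end AffineUtility

lemma continuous_of_isClosed_of_ordConnected_range {X α : Type*} [TopologicalSpace X]
    [LinearOrder α] [TopologicalSpace α] [OrderTopology α] {f : X → α}
    (hf : (range f).OrdConnected) (hle : ∀ x, IsClosed {y | f y ≤ f x})
    (hge : ∀ x, IsClosed {y | f x ≤ f y}) : Continuous f := by
  have hcases : ∀ c, c ∈ range f ∨ (∀ x, f x < c) ∨ ∀ x, c < f x := fun c ↦ by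
    by_contra! hc
    obtain ⟨hc, ⟨x, hx⟩, y, hy⟩ := hc
    exact hc (hf.out ⟨y, rfl⟩ ⟨x, rfl⟩ ⟨hy, hx⟩)
  rw [continuous_iff_lower_upperSemicontinuous, lowerSemicontinuous_iff_isClosed_preimage,
    upperSemicontinuous_iff_isClosed_preimage]
  refine ⟨fun c ↦ ?_, fun c ↦ ?_⟩
  · rcases hcases c with ⟨x, rfl⟩ | hc | hc
    · exact hle x
    · simp [preimage, (hc _).le]
    · simp [preimage, (hc _).not_ge]
  · rcases hcases c with ⟨x, rfl⟩ | hc | hc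
    · exact hge x
    · simp [preimage, (hc _).not_ge]
    · simp [preimage, (hc _).le]

section ProbabilityMeasure

variable {X : Type*} [MeasurableSpace X] {f : X → ℝ}

lemma probabilityMeasure_ext_real {μ ν : ProbabilityMeasure X}
    (h : ∀ A, MeasurableSet A → (μ : Measure X).real A = (ν : Measure X).real A) : μ = ν :=
  ProbabilityMeasure.eq_of_forall_toMeasure_apply_eq _ _ fun A hA ↦
    (measureReal_eq_measureReal_iff).1 (h A hA)

/-- The barycenter of a finitely supported distribution on the space of probability measures. -/
def barycenter (w : StdSimplex ℝ (ProbabilityMeasure X)) : ProbabilityMeasure X where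
  val := w.weights.sum fun μ r ↦ ENNReal.ofReal r • (μ : Measure X)
  property := ⟨by
    simp only [Finsupp.sum, Measure.finsetSum_apply, Measure.smul_apply, measure_univ,
      smul_eq_mul, mul_one]
    rw [← ENNReal.ofReal_sum_of_nonneg fun μ _ ↦ w.weights_nonneg μ]
    exact ENNReal.ofReal_eq_one.2 w.total⟩

lemma integral_barycenter (w : StdSimplex ℝ (ProbabilityMeasure X))
    (hf : ∀ μ : ProbabilityMeasure X, Integrable f μ) :
    ∫ t, f t ∂(barycenter w : Measure X) =
      w.weights.sum fun μ r ↦ r * ∫ t, f t ∂(μ : Measure X) := by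
  change ∫ t, f t ∂(∑ μ ∈ w.weights.support, ENNReal.ofReal (w.weights μ) • (μ : Measure X)) = _
  rw [integral_finsetSum_measure fun μ _ ↦ (hf μ).smul_measure ENNReal.ofReal_ne_top]
  refine Finset.sum_congr rfl fun μ _ ↦ ?_
  rw [integral_smul_measure, ENNReal.toReal_ofReal (w.weights_nonneg μ), smul_eq_mul]

lemma real_barycenter (w : StdSimplex ℝ (ProbabilityMeasure X)) {A : Set X}
    (hA : MeasurableSet A) :
    (barycenter w : Measure X).real A = w.weights.sum fun μ r ↦ r * (μ : Measure X).real A := by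
  simpa only [integral_indicator_one hA] using
    integral_barycenter w (f := A.indicator 1) fun μ ↦ (integrable_const 1).indicator hA

instance instConvexSpaceProbabilityMeasure : ConvexSpace ℝ (ProbabilityMeasure X) :=
  .mk barycenter
    (fun μ ↦ probabilityMeasure_ext_real fun A hA ↦ by simp [real_barycenter _ hA])
    (fun w ↦ probabilityMeasure_ext_real fun A hA ↦ by
      rw [real_barycenter _ hA, real_barycenter _ hA, StdSimplex.weights_map,
        StdSimplex.weights_sConvexComb, Finsupp.sum_mapDomain_index (by simp) (by simp [add_mul]),
        Finsupp.sum_sum_index (by simp) (by simp [add_mul])]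
      simp [real_barycenter _ hA, Finsupp.sum_smul_index, Finsupp.mul_sum, mul_assoc])

lemma isAffineMap_integral (hf : ∀ μ : ProbabilityMeasure X, Integrable f μ) :
    IsAffineMap ℝ fun μ : ProbabilityMeasure X ↦ ∫ t, f t ∂(μ : Measure X) where
  map_sConvexComb w := by
    rw [sConvexComb_map, iConvexComb_eq_sum]
    exact integral_barycenter w hf

lemma integral_mix (hf : ∀ μ : ProbabilityMeasure X, Integrable f μ) (t : I)
    (μ ν : ProbabilityMeasure X) :
    ∫ a, f a ∂((mix t μ ν : ProbabilityMeasure X) : Measure X) =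
      t * ∫ a, f a ∂(μ : Measure X) + (1 - t) * ∫ a, f a ∂(ν : Measure X) :=
  map_mix (isAffineMap_integral hf) t μ ν

lemma isAffineMap_real {A : Set X} (hA : MeasurableSet A) :
    IsAffineMap ℝ fun μ : ProbabilityMeasure X ↦ (μ : Measure X).real A := by
  simpa only [integral_indicator_one hA] using isAffineMap_integral (f := A.indicator 1)
    fun μ ↦ (integrable_const 1).indicator hA

lemma toMeasure_mix (t : I) (μ ν : ProbabilityMeasure X) :
    ((mix t μ ν : ProbabilityMeasure X) : Measure X) =
      ENNReal.ofReal t • (μ : Measure X) + ENNReal.ofReal (1 - t) • (ν : Measure X) := by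
  ext A hA
  have h := map_mix (isAffineMap_real hA) t μ ν
  rw [Measure.add_apply, Measure.smul_apply, Measure.smul_apply, smul_eq_mul, smul_eq_mul,
    ← ofReal_measureReal, h,
    ENNReal.ofReal_add (mul_nonneg (nonneg t) measureReal_nonneg)
      (mul_nonneg (one_minus_nonneg t) measureReal_nonneg),
    ENNReal.ofReal_mul (nonneg t), ENNReal.ofReal_mul (one_minus_nonneg t), ofReal_measureReal,
    ofReal_measureReal]

end ProbabilityMeasure

section WeakTopology

variable {X : Type*} [MeasurableSpace X] [TopologicalSpace X] [OpensMeasurableSpace X]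

lemma continuous_mix (μ ν : ProbabilityMeasure X) : Continuous fun t : I ↦ mix t μ ν := by
  rw [ProbabilityMeasure.continuous_iff_forall_continuous_integral]
  intro f
  simp only [integral_mix fun _ ↦ f.integrable _]
  fun_prop

lemma tendsto_mix_zero (ν : ProbabilityMeasure X) :
    Tendsto (fun p : I × ProbabilityMeasure X ↦ mix p.1 p.2 ν) (𝓝 0 ×ˢ ⊤) (𝓝 ν) := by
  rw [ProbabilityMeasure.tendsto_iff_forall_integral_tendsto]
  intro f
  have hbdd : ∀ μ : ProbabilityMeasure X, ‖∫ a, f a ∂(μ : Measure X)‖ ≤ ‖f‖ := fun μ ↦ by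
    simpa using f.norm_integral_le_norm (μ : Measure X)
  have hcoe : Tendsto (fun p : I × ProbabilityMeasure X ↦ (p.1 : ℝ)) (𝓝 0 ×ˢ ⊤) (𝓝 0) :=
    (continuous_subtype_val.tendsto' (0 : I) 0 rfl).comp tendsto_fst
  have hzero := hcoe.zero_mul_isBoundedUnder_le
    (g := fun p ↦ ∫ a, f a ∂(p.2 : Measure X) - ∫ a, f a ∂(ν : Measure X))
    ⟨‖f‖ + ‖f‖, eventually_map.2 <| .of_forall fun p ↦
      (norm_sub_le _ _).trans (add_le_add (hbdd p.2) (hbdd ν))⟩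
  have hadd := hzero.add_const (∫ a, f a ∂(ν : Measure X))
  rw [zero_add] at hadd
  refine hadd.congr fun p ↦ ?_
  rw [integral_mix fun _ ↦ f.integrable _]
  ring

lemma exists_forall_abs_le_of_isAffineMap {U : ProbabilityMeasure X → ℝ} (hU : IsAffineMap ℝ U)
    (hc : Continuous U) : ∃ C, ∀ μ, |U μ| ≤ C := by
  rcases isEmpty_or_nonempty (ProbabilityMeasure X) with hX | ⟨⟨ν⟩⟩
  · exact ⟨0, hX.elim⟩
  have hlim := Metric.tendsto_nhds.1 ((hc.tendsto ν).comp (tendsto_mix_zero ν)) 1 one_pos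
  obtain ⟨s, hs, q, hq, hsq⟩ := eventually_prod_iff.1 hlim
  obtain ⟨t, ht, hst⟩ := exists_pos_of_eventually_nhds_zero hs
  have ht_pos : (0 : ℝ) < t := ht
  refine ⟨|U ν| + 1 / t, fun μ ↦ ?_⟩
  have hμ : |U (mix t μ ν) - U ν| < 1 := hsq hst (eventually_top.1 hq μ)
  rw [map_mix hU, show t * U μ + (1 - t) * U ν - U ν = t * (U μ - U ν) by ring, abs_mul,
    abs_of_pos ht_pos, ← lt_div_iff₀' ht_pos] at hμ
  linarith [abs_sub_abs_le_abs_sub (U μ) (U ν)]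

lemma isMixturePreference_of_isClosed {R : ProbabilityMeasure X → ProbabilityMeasure X → Prop}
    (htrans : ∀ μ ν η, R μ ν → R ν η → R μ η) (htotal : ∀ μ ν, R μ ν ∨ R ν μ)
    (hind : ∀ μ ν η, ∀ t : I, 0 < t → SPref R μ ν → SPref R (mix t μ η) (mix t ν η))
    (hcont : ∀ μ, IsClosed {ν | R ν μ} ∧ IsClosed {ν | R μ ν}) : IsMixturePreference R where
  trans := htrans _ _ _
  total := htotal
  mix_strict η _ ht hμν := hind _ _ η _ ht hμν
  isClosed_mix_le μ ν η := (hcont η).1.preimage (continuous_mix μ ν)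
  isClosed_le_mix μ ν η := (hcont η).2.preimage (continuous_mix μ ν)

theorem IsMixturePreference.exists_continuous_affine_utility
    {R : ProbabilityMeasure X → ProbabilityMeasure X → Prop} (h : IsMixturePreference R)
    (hcont : ∀ μ, IsClosed {ν | R ν μ} ∧ IsClosed {ν | R μ ν}) :
    ∃ U : ProbabilityMeasure X → ℝ,
      IsAffineMap ℝ U ∧ Continuous U ∧ ∀ μ ν, R μ ν ↔ U ν ≤ U μ := by
  obtain ⟨U, hU, hRU⟩ := h.exists_affine_utility
  simp only [hRU] at hcont
  exact ⟨U, hU, continuous_of_isClosed_of_ordConnected_range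
    (ordConnected_range_of_isAffineMap hU) (fun μ ↦ (hcont μ).2) (fun μ ↦ (hcont μ).1), hRU⟩

end WeakTopology

section IntegralRepresentation

variable {X : Type*} [MeasurableSpace X]

lemma integral_diracProba {f : X → ℝ} (hf : StronglyMeasurable f) (x : X) :
    ∫ a, f a ∂(diracProba x : Measure X) = f x :=
  integral_dirac' f x hf

lemma mem_range_of_measureReal_preimage_ne_zero {μ : Measure X} {Y : Type*} {g : SimpleFunc X Y}
    {y : Y} (hy : μ.real (g ⁻¹' {y}) ≠ 0) : y ∈ g.range := by
  by_contra hmem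
  rw [← g.preimage_eq_empty_iff] at hmem
  exact hy (by rw [hmem, measureReal_empty])

/-- The law of a simple random variable, as a finitely supported distribution. -/
def simpleLaw (μ : ProbabilityMeasure X) {Y : Type*} (g : SimpleFunc X Y) : StdSimplex ℝ Y where
  weights := .onFinset g.range (fun y ↦ (μ : Measure X).real (g ⁻¹' {y}))
    fun _ ↦ mem_range_of_measureReal_preimage_ne_zero
  nonneg := fun _ ↦ measureReal_nonneg
  total := by
    rw [Finsupp.onFinset_sum _ fun _ ↦ rfl,
      sum_measureReal_preimage_singleton g.range fun y _ ↦ g.measurableSet_preimage {y}]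
    simp

lemma iConvexComb_simpleLaw (μ : ProbabilityMeasure X) {Y : Type*} (g : SimpleFunc X Y)
    (φ : Y → ℝ) :
    (simpleLaw μ g).iConvexComb φ = ∑ y ∈ g.range, (μ : Measure X).real (g ⁻¹' {y}) * φ y := by
  have hsupp : (simpleLaw μ g).weights.support ⊆ g.range := fun _ hy ↦
    mem_range_of_measureReal_preimage_ne_zero (Finsupp.mem_support_iff.1 hy)
  rw [iConvexComb_eq_sum]
  exact Finsupp.sum_of_support_subset _ hsupp _ fun y _ ↦ zero_smul ℝ (φ y)

lemma map_simpleFunc_eq_iConvexComb (μ : ProbabilityMeasure X) (g : SimpleFunc X X) :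
    μ.map g.measurable.aemeasurable = (simpleLaw μ g).iConvexComb diracProba := by
  classical
  refine probabilityMeasure_ext_real fun A hA ↦ ?_
  rw [(isAffineMap_real hA).map_iConvexComb, iConvexComb_simpleLaw]
  have hpre : g ⁻¹' A = g ⁻¹' (g.range.filter (· ∈ A) : Finset X) := by
    ext x
    simp
  calc ((μ.map g.measurable.aemeasurable : ProbabilityMeasure X) : Measure X).real A
      = (μ : Measure X).real (g ⁻¹' A) := map_measureReal_apply g.measurable hA
    _ = ∑ y ∈ g.range with y ∈ A, (μ : Measure X).real (g ⁻¹' {y}) := by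
      rw [hpre, sum_measureReal_preimage_singleton _ fun y _ ↦ g.measurableSet_preimage {y}]
    _ = ∑ y ∈ g.range, (μ : Measure X).real (g ⁻¹' {y}) * (diracProba y : Measure X).real A := by
      rw [Finset.sum_filter]
      refine Finset.sum_congr rfl fun y _ ↦ ?_
      by_cases hy : y ∈ A <;> simp [hy, measureReal_def, hA]

variable [TopologicalSpace X] [PseudoMetrizableSpace X] [SecondCountableTopology X]
  [OpensMeasurableSpace X]

lemma denseRange_iConvexComb_diracProba :
    DenseRange fun w : StdSimplex ℝ X ↦ (w.iConvexComb diracProba : ProbabilityMeasure X) := by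
  intro μ
  have hid : StronglyMeasurable (id : X → X) := stronglyMeasurable_id
  have hlim : Tendsto (fun n ↦ μ.map (hid.approx n).measurable.aemeasurable) atTop (𝓝 μ) := by
    refine ProbabilityMeasure.tendsto_iff_forall_integral_tendsto.2 fun f ↦ ?_
    have hmap : ∀ n, ∫ a, f a ∂(μ : Measure X).map (hid.approx n) =
        ∫ a, f (hid.approx n a) ∂(μ : Measure X) := fun n ↦
      integral_map (hid.approx n).measurable.aemeasurable f.continuous.aestronglyMeasurable
    simp only [ProbabilityMeasure.toMeasure_map, hmap]
    exact tendsto_integral_of_dominated_convergence (fun _ ↦ ‖f‖)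
      (fun n ↦ (f.continuous.measurable.comp (hid.approx n).measurable).aestronglyMeasurable)
      (integrable_const _) (fun n ↦ .of_forall fun a ↦ f.norm_coe_le_norm _)
      (.of_forall fun a ↦ (f.continuous.tendsto _).comp (hid.tendsto_approx a))
  refine mem_closure_of_tendsto hlim (.of_forall fun n ↦ ?_)
  exact ⟨simpleLaw μ (hid.approx n), (map_simpleFunc_eq_iConvexComb μ _).symm⟩

theorem exists_boundedContinuousFunction_eq_integral {U : ProbabilityMeasure X → ℝ}
    (hU : IsAffineMap ℝ U) (hc : Continuous U) :
    ∃ u : X →ᵇ ℝ, ∀ μ, U μ = ∫ x, u x ∂(μ : Measure X) := by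
  obtain ⟨C, hC⟩ := exists_forall_abs_le_of_isAffineMap hU hc
  let u : X →ᵇ ℝ := .ofNormedAddCommGroup (fun x ↦ U (diracProba x))
    (hc.comp continuous_diracProba) C fun x ↦ hC _
  have hint : IsAffineMap ℝ fun μ : ProbabilityMeasure X ↦ ∫ x, u x ∂(μ : Measure X) :=
    isAffineMap_integral fun _ ↦ u.integrable _
  refine ⟨u, congrFun (denseRange_iConvexComb_diracProba.equalizer hc
    (ProbabilityMeasure.continuous_integral_boundedContinuousFunction u) (funext fun w ↦ ?_))⟩
  simp only [Function.comp_apply, hU.map_iConvexComb, hint.map_iConvexComb,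
    integral_diracProba u.continuous.stronglyMeasurable]
  rfl

end IntegralRepresentation

/-- The expected utility representation `μ ≽ ν ↔ ∫ u dν ≤ ∫ u dμ` of a preference on lotteries. -/
def Represents {X : Type*} [MeasurableSpace X]
    (R : ProbabilityMeasure X → ProbabilityMeasure X → Prop) (u : X → ℝ) : Prop :=
  ∀ μ ν, R μ ν ↔ ∫ x, u x ∂(ν : Measure X) ≤ ∫ x, u x ∂(μ : Measure X)

lemma Represents.exists_pos_eq_mul_add {X : Type*} [MeasurableSpace X] [TopologicalSpace X]
    [OpensMeasurableSpace X] {R : ProbabilityMeasure X → ProbabilityMeasure X → Prop}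
    {u v : X →ᵇ ℝ} (hu : Represents R u) (hv : Represents R v) :
    ∃ a, 0 < a ∧ ∃ b, ∀ x, v x = a * u x + b := by
  have hint : ∀ w : X →ᵇ ℝ, IsAffineMap ℝ fun μ : ProbabilityMeasure X ↦
      ∫ x, w x ∂(μ : Measure X) := fun w ↦ isAffineMap_integral fun _ ↦ w.integrable _
  obtain ⟨a, ha, b, hab⟩ := exists_pos_eq_mul_add_of_le_iff_le (hint u) (hint v)
    fun μ ν ↦ (hu ν μ).symm.trans (hv ν μ)
  refine ⟨a, ha, b, fun x ↦ ?_⟩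
  simpa only [integral_diracProba u.continuous.stronglyMeasurable,
    integral_diracProba v.continuous.stronglyMeasurable] using hab (diracProba x)

end VonNeumannMorgenstern

open VonNeumannMorgenstern

theorem vonNeumann_morgenstern_probability_measures_general {X : Type*} [MeasurableSpace X]
    [TopologicalSpace X] [PseudoMetrizableSpace X] [SecondCountableTopology X]
    [OpensMeasurableSpace X] {R : ProbabilityMeasure X → ProbabilityMeasure X → Prop}
    (htrans : ∀ μ ν η, R μ ν → R ν η → R μ η) (htotal : ∀ μ ν, R μ ν ∨ R ν μ)
    (hind : ∀ μ ν η, ∀ t : I, 0 < t → SPref R μ ν → SPref R (mix t μ η) (mix t ν η))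
    (hcont : ∀ μ, IsClosed {ν | R ν μ} ∧ IsClosed {ν | R μ ν}) :
    ∃ u : X →ᵇ ℝ, Represents R u ∧
      ∀ v : X →ᵇ ℝ, Represents R v → ∃ a, 0 < a ∧ ∃ b, ∀ x, v x = a * u x + b := by
  have hR := isMixturePreference_of_isClosed htrans htotal hind hcont
  obtain ⟨U, hU, hU_cont, hRU⟩ := hR.exists_continuous_affine_utility hcont
  obtain ⟨u, hUu⟩ := exists_boundedContinuousFunction_eq_integral hU hU_cont
  have hu : Represents R u := fun μ ν ↦ by rw [hRU, hUu, hUu]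
  exact ⟨u, hu, fun _ ↦ hu.exists_pos_eq_mul_add⟩

end

/-- von Neumann–Morgenstern representation theorem on the space of Borel
probability measures on ℝ with the weak topology: a weakly continuous total
preorder satisfying independence and the Archimedean axiom is represented by the
expectation of a bounded continuous utility index, unique up to positive affine
transformations. -/
theorem vonNeumann_morgenstern_probability_measures
    (R : ProbabilityMeasure ℝ → ProbabilityMeasure ℝ → Prop)
    (hrefl : ∀ μ, R μ μ)
    (htrans : ∀ μ ν η, R μ ν → R ν η → R μ η)
    (htotal : ∀ μ ν, R μ ν ∨ R ν μ)
    (hind : ∀ μ ν η : ProbabilityMeasure ℝ, ∀ α : ℝ, 0 < α → α ≤ 1 →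
      SPref R μ ν →
      ∀ κ κ' : ProbabilityMeasure ℝ,
        (κ : Measure ℝ) = mixMeasure α μ η → (κ' : Measure ℝ) = mixMeasure α ν η →
        SPref R κ κ')
    (harch : ∀ μ ν η : ProbabilityMeasure ℝ, SPref R μ ν → SPref R ν η →
      ∃ α ∈ Set.Ioo (0:ℝ) 1, ∃ β ∈ Set.Ioo (0:ℝ) 1,
        ∃ κ κ' : ProbabilityMeasure ℝ,
          (κ : Measure ℝ) = mixMeasure α μ η ∧
          (κ' : Measure ℝ) = mixMeasure β μ η ∧
          SPref R κ ν ∧ SPref R ν κ')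
    (hcont : ∀ μ : ProbabilityMeasure ℝ,
      IsClosed {ν | R ν μ} ∧ IsClosed {ν | R μ ν}) :
    ∃ u : ℝ → ℝ, Continuous u ∧ (∃ C : ℝ, ∀ t : ℝ, |u t| ≤ C) ∧
      (∀ μ ν : ProbabilityMeasure ℝ,
        R μ ν ↔ ∫ t, u t ∂(ν : Measure ℝ) ≤ ∫ t, u t ∂(μ : Measure ℝ)) ∧
      (∀ v : ℝ → ℝ, Continuous v → (∃ C : ℝ, ∀ t : ℝ, |v t| ≤ C) →
        (∀ μ ν : ProbabilityMeasure ℝ,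
          R μ ν ↔ ∫ t, v t ∂(ν : Measure ℝ) ≤ ∫ t, v t ∂(μ : Measure ℝ)) →
        ∃ a : ℝ, 0 < a ∧ ∃ b : ℝ, ∀ t : ℝ, v t = a * u t + b) := by
  obtain ⟨u, hu, huniq⟩ := vonNeumann_morgenstern_probability_measures_general htrans htotal
    (fun μ ν η t ht hμν ↦ hind μ ν η t ht t.2.2 hμν _ _
      (VonNeumannMorgenstern.toMeasure_mix t μ η) (VonNeumannMorgenstern.toMeasure_mix t ν η)) hcont
  exact ⟨u, u.continuous, ⟨‖u‖, u.norm_coe_le_norm⟩, hu,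
    fun v hv ⟨C, hC⟩ hvR ↦ huniq (.ofNormedAddCommGroup v hv C hC) hvR⟩
end

section
/- Let (Ω, ℱ, P) be a probability space and 𝒜 ⊆ ℱ a sub-σ-algebra. Let x, y : Ω → ℝ be ℱ-measurable functions with exp(x) and exp(y) integrable, and let A ∈ 𝒜. Then, P-almost everywhere, log E[exp(1_A·x + 1_{A^c}·y) | 𝒜] = 1_A · log E[exp(x) | 𝒜] + 1_{A^c} · log E[exp(y) | 𝒜]. (This is the locality property of the conditional entropic utility U(x) = log E[e^x | 𝒜] proved in the paper, showing that it represents a conditional preference.) -/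
open MeasureTheory Classical

noncomputable section

section Locality

variable {Ω E : Type*} [NormedAddCommGroup E] [NormedSpace ℝ E] [CompleteSpace E]
  {m m0 : MeasurableSpace Ω} {μ : Measure Ω} {A : Set Ω} [DecidablePred (· ∈ A)]

theorem condExp_piecewise_ae_eq (hm : m ≤ m0) {f g : Ω → E} (hf : Integrable f μ)
    (hg : Integrable g μ) (hA : MeasurableSet[m] A) :
    μ[A.piecewise f g | m] =ᵐ[μ] A.piecewise μ[f | m] μ[g | m] := by
  simp only [← Set.indicator_add_compl_eq_piecewise]
  calc μ[A.indicator f + Aᶜ.indicator g | m]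
      =ᵐ[μ] μ[A.indicator f | m] + μ[Aᶜ.indicator g | m] :=
        condExp_add (hf.indicator (hm A hA)) (hg.indicator (hm A hA).compl) m
    _ =ᵐ[μ] A.indicator μ[f | m] + Aᶜ.indicator μ[g | m] :=
        (condExp_indicator hf hA).add (condExp_indicator hg hA.compl)

/-- When `v` is inverse to `u`, the function `v ∘ μ[u ∘ x | m]` is the conditional certainty
equivalent of `x` under the utility `u`; the entropic utility has `u = exp` and `v = log`. -/
theorem entropic_utility_locality_general {S T : Type*} (hm : m ≤ m0) [SigmaFinite (μ.trim hm)]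
    (u : S → E) (v : E → T) {x y : Ω → S} (hx : Integrable (fun ω => u (x ω)) μ)
    (hy : Integrable (fun ω => u (y ω)) μ) (hA : MeasurableSet[m] A) :
    (fun ω => v (μ[fun ω' => u (A.piecewise x y ω') | m] ω)) =ᵐ[μ]
      A.piecewise (fun ω => v (μ[fun ω' => u (x ω') | m] ω))
        (fun ω => v (μ[fun ω' => u (y ω') | m] ω)) := by
  have utility_piecewise : (fun ω => u (A.piecewise x y ω)) =
      A.piecewise (fun ω => u (x ω)) (fun ω => u (y ω)) :=
    funext fun _ => A.apply_piecewise x y fun _ => u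
  rw [utility_piecewise]
  filter_upwards [condExp_piecewise_ae_eq hm hx hy hA] with ω condExp_eq
  rw [condExp_eq]
  exact A.apply_piecewise _ _ fun _ => v

end Locality

/-- Locality of the conditional entropic utility `U(x) = log E[exp x | 𝒜]`:
for `A ∈ 𝒜`, almost everywhere
`log E[exp(1_A x + 1_{Aᶜ} y) | 𝒜] = 1_A log E[exp x | 𝒜] + 1_{Aᶜ} log E[exp y | 𝒜]`. -/
theorem entropic_utility_locality
    {Ω : Type*} {m0 : MeasurableSpace Ω} (μ : Measure Ω) [IsProbabilityMeasure μ]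
    (m : MeasurableSpace Ω) (hm : m ≤ m0)
    (x y : Ω → ℝ) (hx : Measurable x) (hy : Measurable y)
    (hix : Integrable (fun ω => Real.exp (x ω)) μ)
    (hiy : Integrable (fun ω => Real.exp (y ω)) μ)
    (A : Set Ω) (hA : MeasurableSet[m] A) :
    (fun ω => Real.log ((μ[fun ω' => Real.exp (Set.piecewise A x y ω')|m]) ω))
      =ᵐ[μ]
    Set.piecewise A
      (fun ω => Real.log ((μ[fun ω' => Real.exp (x ω')|m]) ω))
      (fun ω => Real.log ((μ[fun ω' => Real.exp (y ω')|m]) ω)) :=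
  entropic_utility_locality_general hm Real.exp Real.log hix hiy hA

end
end
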